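/- arXiv:1808.04805 — 2 statements merged into one kernel-verified Lean document; each statement's English description precedes it below -/
import Mathlib

section
/- Let k be a field, n ≥ 1, d ≥ 1 and r ≤ n natural numbers, let I be an ideal of k[x_1,…,x_n] generated by polynomials of total degree at most d, and let u ∈ k[x_1,…,x_n] have total degree at most d. If there exists a nonzero polynomial p ∈ k[x_1,…,x_r][Y] (Y a new indeterminate) such that the polynomial obtained from p by substituting u for Y belongs to I, then there exists a nonzero polynomial q ∈ k[x_1,…,x_r][Y] of total degree (in the variables x_1,…,x_r, Y together) at most 2·d^(2^(n+1)) such that the polynomial obtained from q by substituting u for Y belongs to I. -/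
/-!
Write `x` for the variables of the given ring and adjoin one new variable `yᵢ` for each of the
polynomials `sᵢ` to be substituted. An annihilating polynomial modulo `I` is then an element of the
elimination ideal of `J = I + (yᵢ - sᵢ)`, obtained by eliminating the variables `x`, and `J` is
still generated in degree at most `d`. We eliminate one variable at a time, and every elimination
squares the degree bound.

To eliminate a variable over an infinite field, fix a nonzero generator `f` of degree at most `d`
and let `g` run through the linear span `V` of all generators. A generic oblique change of the
variables `x` makes the leading coefficient `a` of `f` a polynomial in the `yᵢ` alone. At a prime
containing the resultants `Res(f, g)` but not `a`, every `g ∈ V` shares a root with `f`; as `f` has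
finitely many roots and `V` is not a finite union of proper subspaces, some root is shared by all of
`V`. Hence any nonzero `b` in the elimination ideal also lies in that prime, so that a power of
`a * b` lies in the ideal of the resultants, which are of degree at most `d ^ 2`.

A general `k` is replaced by its algebraic closure; a linear functional applied to coefficients
brings the annihilating polynomial back to `k`.
-/

section ResultantIdeal

open Polynomial

variable {B : Type*} [CommRing B]

/-- The ideal generated by the resultants of `f` with the elements of `V`, which eliminates the
variable of `B[X]`. All members of `V` are given the formal degree `d`, so that each resultant is a
determinant of the same size. -/
noncomputable def resultantIdeal (f : B[X]) (V : Set B[X]) (d : ℕ) : Ideal B :=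
  Ideal.span ((fun g => resultant f g f.natDegree d) '' V)

lemma exists_isRoot_of_resultant_eq_zero {L : Type*} [Field L] [IsAlgClosed L] {f g : L[X]} {d : ℕ}
    (hf : f ≠ 0) (hg : g.natDegree ≤ d) (h : resultant f g f.natDegree d = 0) :
    ∃ x ∈ f.roots, g.IsRoot x := by
  rw [resultant_eq_prod_eval f g d hg (IsAlgClosed.splits f)] at h
  have hprod := (mul_eq_zero.mp h).resolve_left (pow_ne_zero _ (leadingCoeff_ne_zero.mpr hf))
  simpa [Multiset.prod_eq_zero_iff] using hprod

lemma exists_common_root_of_resultant_eq_zero {k L : Type*} [Field k] [Infinite k] [Algebra k B]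
    [Field L] [IsAlgClosed L] (ψ : B →+* L) {f : B[X]} (hf : ψ f.leadingCoeff ≠ 0)
    {V : Submodule k B[X]} {d : ℕ} (hV : ∀ g ∈ V, g.natDegree ≤ d)
    (hres : ∀ g ∈ V, ψ (resultant f g f.natDegree d) = 0) :
    ∃ x, ∀ g ∈ V, g.eval₂ ψ x = 0 := by
  have hdeg : (f.map ψ).natDegree = f.natDegree := natDegree_map_of_leadingCoeff_ne_zero ψ hf
  have hf0 : f.map ψ ≠ 0 := fun h => hf <| by
    rw [leadingCoeff, ← coeff_map, h, coeff_zero]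
  classical
  let vanishing (x : (f.map ψ).roots.toFinset) : Submodule k V :=
    ((RingHom.ker (eval₂RingHom ψ (x : L))).restrictScalars k).comap V.subtype
  by_contra! hno
  obtain ⟨⟨g, hg⟩, hgx⟩ : ∃ g : V, ∀ x, g ∉ vanishing x := by
    refine Submodule.exists_forall_notMem_of_forall_ne_top vanishing fun x htop => ?_
    obtain ⟨g, hg, hgx⟩ := hno x
    exact hgx (show (⟨g, hg⟩ : V) ∈ vanishing x from htop ▸ Submodule.mem_top)
  obtain ⟨x, hx, hgroot⟩ := exists_isRoot_of_resultant_eq_zero hf0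
    (natDegree_map_le.trans (hV g hg))
    (by rw [hdeg, resultant_map_map, hres g hg])
  exact hgx ⟨x, Multiset.mem_toFinset.mpr hx⟩ ((eval_map ψ x).symm.trans hgroot)

lemma leadingCoeff_mul_mem_radical_resultantIdeal {k : Type*} [Field k] [Infinite k] [Algebra k B]
    {V : Submodule k B[X]} {d : ℕ} (hV : ∀ g ∈ V, g.natDegree ≤ d) (f : B[X]) {b : B}
    (hb : C b ∈ Ideal.span (V : Set B[X])) :
    f.leadingCoeff * b ∈ (resultantIdeal f V d).radical := by
  rw [Ideal.radical_eq_sInf, Ideal.mem_sInf]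
  rintro Q ⟨hQ, hprime⟩
  by_cases hlead : f.leadingCoeff ∈ Q
  · exact Q.mul_mem_right b hlead
  let ψ : B →+* AlgebraicClosure Q.ResidueField := algebraMap B _
  have hψ (c : B) : ψ c = 0 ↔ c ∈ Q := by
    rw [← Ideal.algebraMap_residueField_eq_zero,
      ← map_eq_zero (algebraMap Q.ResidueField (AlgebraicClosure Q.ResidueField)),
      ← IsScalarTower.algebraMap_apply]
  obtain ⟨x, hx⟩ := exists_common_root_of_resultant_eq_zero ψ ((hψ _).not.mpr hlead) hV
    fun g hg => (hψ _).mpr (hQ (Ideal.subset_span ⟨g, hg, rfl⟩))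
  have hker : Ideal.span (V : Set B[X]) ≤ RingHom.ker (eval₂RingHom ψ x) := Ideal.span_le.mpr hx
  have hbx : eval₂ ψ x (C b) = 0 := hker hb
  exact Q.mul_mem_left _ ((hψ b).mp ((eval₂_C ψ x).symm.trans hbx))

lemma resultantIdeal_le_comap_C {J : Ideal B[X]} {f : B[X]} (hf : f ∈ J) {V : Set B[X]}
    (hV : V ⊆ J) {d : ℕ} (hd : d ≠ 0) (hdeg : ∀ g ∈ V, g.natDegree ≤ d) :
    resultantIdeal f V d ≤ J.comap C := by
  rw [resultantIdeal, Ideal.span_le]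
  rintro _ ⟨g, hg, rfl⟩
  obtain ⟨p, q, -, -, hpq⟩ :=
    exists_mul_add_mul_eq_C_resultant f g le_rfl (hdeg g hg) (Or.inr hd)
  rw [SetLike.mem_coe, Ideal.mem_comap, ← hpq]
  exact add_mem (J.mul_mem_right _ hf) (J.mul_mem_right _ (hV hg))

end ResultantIdeal

open MvPolynomial

section DegreeBounds

variable {R σ τ : Type*} [CommRing R]

lemma totalDegree_aeval_le {s : σ → MvPolynomial τ R} {e : ℕ} (hs : ∀ i, (s i).totalDegree ≤ e)
    (f : MvPolynomial σ R) : (aeval s f).totalDegree ≤ f.totalDegree * e := by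
  rw [aeval_def, eval₂_eq]
  refine totalDegree_finsetSum_le fun α hα => ?_
  calc (C (coeff α f) * ∏ i ∈ α.support, s i ^ α i).totalDegree
      ≤ (C (coeff α f) : MvPolynomial τ R).totalDegree
        + ∑ i ∈ α.support, (s i ^ α i).totalDegree :=
        (totalDegree_mul _ _).trans (Nat.add_le_add_left (totalDegree_finsetProd _ _) _)
    _ ≤ 0 + ∑ i ∈ α.support, α i * e := by
        gcongr with i
        · exact (totalDegree_C _).le
        · exact (totalDegree_pow _ _).trans (Nat.mul_le_mul_left _ (hs i))
    _ ≤ f.totalDegree * e := by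
        rw [zero_add, ← Finset.sum_mul]
        exact Nat.mul_le_mul_right e (le_totalDegree hα)

lemma totalDegree_map_le {S : Type*} [CommRing S] (φ : R →+* S) (f : MvPolynomial σ R) :
    (map φ f).totalDegree ≤ f.totalDegree :=
  Finset.sup_mono (support_map_subset φ f)

lemma totalDegree_le_of_mem_span {S : Set (MvPolynomial σ R)} {d : ℕ}
    (hS : ∀ g ∈ S, g.totalDegree ≤ d) {g : MvPolynomial σ R} (hg : g ∈ Submodule.span R S) :
    g.totalDegree ≤ d := by
  rw [← mem_restrictTotalDegree]
  exact Submodule.span_le.mpr (fun g hg => (mem_restrictTotalDegree σ d g).mpr (hS g hg)) hg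

lemma totalDegree_det_le {ι : Type*} [Fintype ι] [DecidableEq ι]
    {M : Matrix ι ι (MvPolynomial σ R)} {row col : ι → ℕ} {N : ℕ}
    (hM : ∀ i j, M i j ≠ 0 → (M i j).totalDegree + row i ≤ col j)
    (hN : ∑ j, col j ≤ N + ∑ i, row i) : M.det.totalDegree ≤ N := by
  rw [Matrix.det_apply]
  refine totalDegree_finsetSum_le fun e _ => (totalDegree_smul_le _ _).trans ?_
  by_cases h0 : ∏ i, M (e i) i = 0
  · simp [h0]
  have hfactor (i : ι) : M (e i) i ≠ 0 := fun h => h0 (Finset.prod_eq_zero (Finset.mem_univ i) h)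
  have hsum : ∑ i, (M (e i) i).totalDegree + ∑ i, row i ≤ ∑ i, col i := by
    rw [← Equiv.sum_comp e row, ← Finset.sum_add_distrib]
    exact Finset.sum_le_sum fun i _ => hM _ _ (hfactor i)
  have := totalDegree_finsetProd Finset.univ fun i => M (e i) i
  lia

lemma totalDegree_coeff_optionEquivLeft_le {f : MvPolynomial (Option σ) R} {i : ℕ}
    (hi : (optionEquivLeft R σ f).coeff i ≠ 0) :
    ((optionEquivLeft R σ f).coeff i).totalDegree + i ≤ f.totalDegree :=
  totalDegree_coeff_optionEquivLeft_add_le R σ f i <|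
    (Polynomial.le_natDegree_of_ne_zero hi).trans <|
      (natDegree_optionEquivLeft R f).trans_le (degreeOf_le_totalDegree f none)

lemma totalDegree_resultant_le {f g : Polynomial (MvPolynomial σ R)} {a b : ℕ}
    (hf : ∀ i, f.coeff i ≠ 0 → (f.coeff i).totalDegree + i ≤ a)
    (hg : ∀ i, g.coeff i ≠ 0 → (g.coeff i).totalDegree + i ≤ b) (m : ℕ) :
    (Polynomial.resultant f g m b).totalDegree ≤ a * b := by
  -- In row `i`, a column carrying the coefficients of `f` shifted down by `j` has the entry
  -- `f.coeff (i - j)`, whose degree is at most `a + j - i`.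
  let col : Fin (m + b) → ℕ := Fin.addCases (fun j => b + j) fun j => a + j
  have hentry (i j : Fin (m + b)) (hij : Polynomial.sylvester f g m b i j ≠ 0) :
      (Polynomial.sylvester f g m b i j).totalDegree + i ≤ col j := by
    cases j using Fin.addCases <;>
      simp only [Polynomial.sylvester, Matrix.of_apply, Fin.addCases_left, Fin.addCases_right,
        ne_eq, ite_eq_right_iff, Classical.not_imp, Set.mem_Icc, col] at hij ⊢
    · rw [if_pos hij.1]
      have := hg _ hij.2
      lia
    · rw [if_pos hij.1]
      have := hf _ hij.2
      lia
  have hsum : ∑ j, col j = a * b + ∑ i : Fin (m + b), (i : ℕ) := by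
    simp only [col, Fin.sum_univ_add, Fin.addCases_left, Fin.addCases_right,
      Finset.sum_add_distrib, Fin.val_castAdd, Fin.val_natAdd, Finset.sum_const, Finset.card_univ,
      Fintype.card_fin, smul_eq_mul]
    ring
  exact totalDegree_det_le hentry hsum.le

end DegreeBounds

section LeadingCoefficient

open Polynomial

variable {ι R B : Type*} [CommRing R] [CommRing B] [Algebra R B]

lemma natDegree_prod_pow_le {s : ι → B[X]} {w : ι → ℕ} (hs : ∀ i, (s i).natDegree ≤ w i)
    (α : ι →₀ ℕ) : (∏ i ∈ α.support, s i ^ α i).natDegree ≤ Finsupp.weight w α := by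
  rw [Finsupp.weight_apply]
  exact (natDegree_prod_le _ _).trans <|
    Finset.sum_le_sum fun i _ => natDegree_pow_le_of_le _ (hs i)

lemma coeff_prod_of_forall_natDegree_le {t : Finset ι} {p : ι → B[X]} {w : ι → ℕ}
    (hp : ∀ i, (p i).natDegree ≤ w i) :
    (∏ i ∈ t, p i).coeff (∑ i ∈ t, w i) = ∏ i ∈ t, (p i).coeff (w i) := by
  induction t using Finset.cons_induction with
  | empty => simp
  | cons i t hi ih =>
    rw [Finset.prod_cons, Finset.sum_cons, Finset.prod_cons, ← ih]
    exact coeff_mul_add_eq_of_natDegree_le (hp i)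
      ((natDegree_prod_le _ _).trans (Finset.sum_le_sum fun j _ => hp j))

lemma coeff_prod_pow {s : ι → B[X]} {w : ι → ℕ} (hs : ∀ i, (s i).natDegree ≤ w i)
    (α : ι →₀ ℕ) : (∏ i ∈ α.support, s i ^ α i).coeff (Finsupp.weight w α)
      = ∏ i ∈ α.support, (s i).coeff (w i) ^ α i := by
  rw [Finsupp.weight_apply]
  refine (coeff_prod_of_forall_natDegree_le fun i => natDegree_pow_le_of_le _ (hs i)).trans ?_
  exact Finset.prod_congr rfl fun i _ => coeff_pow_of_natDegree_le (hs i)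

lemma natDegree_aeval_le_weightedTotalDegree {s : ι → B[X]} {w : ι → ℕ}
    (hs : ∀ i, (s i).natDegree ≤ w i) (f : MvPolynomial ι R) :
    (aeval s f).natDegree ≤ weightedTotalDegree w f := by
  rw [MvPolynomial.aeval_def, MvPolynomial.eval₂_eq]
  refine natDegree_sum_le_of_forall_le _ _ fun α hα => ?_
  exact (natDegree_C_mul_le _ _).trans <|
    (natDegree_prod_pow_le hs α).trans (le_weightedTotalDegree w hα)

lemma coeff_aeval_weightedTotalDegree {s : ι → B[X]} {w : ι → ℕ}
    (hs : ∀ i, (s i).natDegree ≤ w i) (f : MvPolynomial ι R) :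
    (aeval s f).coeff (weightedTotalDegree w f) = aeval (fun i => (s i).coeff (w i))
      (weightedHomogeneousComponent w (weightedTotalDegree w f) f) := by
  classical
  rw [MvPolynomial.aeval_def, MvPolynomial.eval₂_eq, finsetSum_coeff,
    weightedHomogeneousComponent_apply, map_sum, Finset.sum_filter]
  refine Finset.sum_congr rfl fun α hα => ?_
  rw [Polynomial.algebraMap_apply, Polynomial.coeff_C_mul]
  split_ifs with h
  · rw [← h, coeff_prod_pow hs, MvPolynomial.aeval_monomial, Finsupp.prod]
  · rw [coeff_eq_zero_of_natDegree_lt, mul_zero]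
    exact (natDegree_prod_pow_le hs α).trans_lt ((le_weightedTotalDegree w hα).lt_of_ne h)

lemma leadingCoeff_aeval {s : ι → B[X]} {w : ι → ℕ} (hs : ∀ i, (s i).natDegree ≤ w i)
    {f : MvPolynomial ι R} (hf : aeval (fun i => (s i).coeff (w i))
      (weightedHomogeneousComponent w (weightedTotalDegree w f) f) ≠ 0) :
    (aeval s f).leadingCoeff = aeval (fun i => (s i).coeff (w i))
      (weightedHomogeneousComponent w (weightedTotalDegree w f) f) := by
  rw [← coeff_aeval_weightedTotalDegree hs] at hf ⊢
  rw [leadingCoeff, natDegree_eq_of_le_of_coeff_ne_zero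
    (natDegree_aeval_le_weightedTotalDegree hs f) hf]

lemma weightedHomogeneousComponent_weightedTotalDegree_ne_zero (w : ι → ℕ) {f : MvPolynomial ι R}
    (hf : f ≠ 0) : weightedHomogeneousComponent w (weightedTotalDegree w f) f ≠ 0 := by
  classical
  obtain ⟨α, hα, hmax⟩ := Finset.exists_mem_eq_sup f.support (support_nonempty.mpr hf)
    fun α => Finsupp.weight w α
  refine ne_zero_iff.mpr ⟨α, ?_⟩
  rw [coeff_weightedHomogeneousComponent, if_pos]
  exacts [mem_support_iff.mp hα, hmax.symm]

end LeadingCoefficient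

lemma exists_eval_ne_zero {ι k A : Type*} [Field k] [Infinite k] [CommRing A] [IsDomain A]
    [Algebra k A] {h : MvPolynomial ι A} (hh : h ≠ 0) :
    ∃ v : ι → k, eval (fun i => algebraMap k A (v i)) h ≠ 0 := by
  by_contra! hzero
  refine hh (funext_set (fun _ => Set.range (algebraMap k A))
    (fun _ => Set.infinite_range_of_injective (algebraMap k A).injective) fun x hx => ?_)
  choose v hv using fun i => hx i (Set.mem_univ i)
  rw [map_zero, ← hzero v]
  simp only [hv]

lemma exists_aeval_sumElim_ne_zero {τ σ k : Type*} [Field k] [Infinite k] (i : τ)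
    {h : MvPolynomial (τ ⊕ σ) k} (hh : h ≠ 0) :
    ∃ v : τ → k, v i ≠ 0 ∧ aeval (Sum.elim (C ∘ v) X : τ ⊕ σ → MvPolynomial σ k) h ≠ 0 := by
  obtain ⟨v, hv⟩ := exists_eval_ne_zero (k := k) (A := MvPolynomial σ k)
    (h := X i * sumAlgEquiv k τ σ h) (mul_ne_zero (X_ne_zero i)
      ((map_ne_zero_iff _ (sumAlgEquiv k τ σ).injective).mpr hh))
  rw [map_mul, eval_X] at hv
  refine ⟨v, fun hi => left_ne_zero_of_mul hv (by rw [hi, map_zero]), ?_⟩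
  have heval : aeval (Sum.elim (C ∘ v) X : τ ⊕ σ → MvPolynomial σ k) =
      ((aeval (R := MvPolynomial σ k) fun i =>
        algebraMap k (MvPolynomial σ k) (v i)).restrictScalars k).comp
          (sumAlgEquiv k τ σ).toAlgHom := by
    ext (i | j) <;> simp [sumAlgEquiv_X_inl, sumAlgEquiv_X_inr]
  rw [heval]
  exact right_ne_zero_of_mul hv

section Oblique

variable {k τ σ : Type*} [Field k]

lemma C_mul_C_mul_cancel {R : Type*} [CommSemiring R] {a b : R} (hab : a * b = 1)
    (f : MvPolynomial σ R) : C a * (C b * f) = f := by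
  rw [← mul_assoc, ← C_mul, hab, C_1, one_mul]

/-- The oblique change of variables `x none ↦ v none * X`, `x (some j) ↦ x j + v (some j) * X`
fixing the variables indexed by `σ`, read as a polynomial in `X`. For generic `v` it turns the
leading coefficient of a given polynomial into one that involves only the variables in `σ`. -/
noncomputable def obliqueEquiv (v : Option τ → k) (hv : v none ≠ 0) :
    MvPolynomial (Option τ ⊕ σ) k ≃ₐ[k] Polynomial (MvPolynomial (τ ⊕ σ) k) :=
  (AlgEquiv.ofAlgHom
    (aeval (Sum.elim (fun i => i.elim 0 (fun j => X (some (Sum.inl j))) + C (v i) * X none)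
      fun j => X (some (Sum.inr j))))
    (aeval fun i => i.elim (C (v none)⁻¹ * X (Sum.inl none))
      (Sum.elim
        (fun j => X (Sum.inl (some j)) - C (v (some j)) * (C (v none)⁻¹ * X (Sum.inl none)))
        fun j => X (Sum.inr j)))
    (algHom_ext fun i => by
      obtain _ | _ | _ := i <;> simp [algebraMap_eq, C_mul_C_mul_cancel (inv_mul_cancel₀ hv)])
    (algHom_ext fun i => by
      obtain (_ | _) | _ := i <;>
        simp [algebraMap_eq, C_mul_C_mul_cancel (mul_inv_cancel₀ hv)])).trans
  (optionEquivLeft k (τ ⊕ σ))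

lemma obliqueEquiv_X_inl (v : Option τ → k) (hv : v none ≠ 0) (i : Option τ) :
    obliqueEquiv v hv (X (Sum.inl i) : MvPolynomial (Option τ ⊕ σ) k) =
      i.elim 0 (fun j => Polynomial.C (X (Sum.inl j))) + Polynomial.C (C (v i)) * Polynomial.X := by
  cases i <;>
    simp [obliqueEquiv, optionEquivLeft_X_some, optionEquivLeft_X_none, optionEquivLeft_C]

lemma obliqueEquiv_rename_inr (v : Option τ → k) (hv : v none ≠ 0) (q : MvPolynomial σ k) :
    obliqueEquiv v hv (rename Sum.inr q) = Polynomial.C (rename Sum.inr q) := by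
  have halg : (obliqueEquiv v hv).toAlgHom.comp (rename (Sum.inr : σ → Option τ ⊕ σ)) =
      Polynomial.CAlgHom.comp (rename Sum.inr) := by
    ext j : 1
    simp [obliqueEquiv, optionEquivLeft_X_some]
  exact DFunLike.congr_fun halg q

lemma totalDegree_coeff_obliqueEquiv_le (v : Option τ → k) (hv : v none ≠ 0)
    {f : MvPolynomial (Option τ ⊕ σ) k} {i : ℕ} (hi : (obliqueEquiv v hv f).coeff i ≠ 0) :
    ((obliqueEquiv v hv f).coeff i).totalDegree + i ≤ f.totalDegree := by
  refine (totalDegree_coeff_optionEquivLeft_le hi).trans ?_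
  refine (totalDegree_aeval_le (e := 1) ?_ f).trans (mul_one _).le
  have hlinear (c : k) (i : Option (τ ⊕ σ)) :
      (C c * X i : MvPolynomial (Option (τ ⊕ σ)) k).totalDegree ≤ 1 := by
    rw [C_mul']
    exact (totalDegree_smul_le _ _).trans (totalDegree_X i).le
  rintro ((_ | j) | j)
  · simpa using hlinear _ _
  · exact (totalDegree_add _ _).trans (max_le (totalDegree_X _).le (hlinear _ _))
  · exact (totalDegree_X _).le

lemma natDegree_obliqueEquiv_le (v : Option τ → k) (hv : v none ≠ 0)
    (f : MvPolynomial (Option τ ⊕ σ) k) : (obliqueEquiv v hv f).natDegree ≤ f.totalDegree := by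
  rw [Polynomial.natDegree_le_iff_coeff_eq_zero]
  intro N hN
  by_contra hne
  have := totalDegree_coeff_obliqueEquiv_le v hv hne
  lia

lemma exists_leadingCoeff_obliqueEquiv_eq_rename [Infinite k] {f : MvPolynomial (Option τ ⊕ σ) k}
    (hf : f ≠ 0) : ∃ (v : Option τ → k) (hv : v none ≠ 0) (a : MvPolynomial σ k),
      a ≠ 0 ∧ (obliqueEquiv v hv f).leadingCoeff = rename Sum.inr a := by
  let w : Option τ ⊕ σ → ℕ := Sum.elim 1 0
  obtain ⟨v, hv, ha⟩ := exists_aeval_sumElim_ne_zero none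
    (weightedHomogeneousComponent_weightedTotalDegree_ne_zero w hf)
  refine ⟨v, hv, _, ha, ?_⟩
  have hdeg (i : Option τ ⊕ σ) : (obliqueEquiv v hv (X i)).natDegree ≤ w i := by
    obtain i | j := i
    · exact (natDegree_obliqueEquiv_le v hv _).trans (totalDegree_X _).le
    · rw [← rename_X Sum.inr j, obliqueEquiv_rename_inr, Polynomial.natDegree_C]
      exact zero_le
  have htop (i : Option τ ⊕ σ) : (obliqueEquiv v hv (X i)).coeff (w i) =
      rename (Sum.inr : σ → τ ⊕ σ) ((Sum.elim (C ∘ v) X : _ → MvPolynomial σ k) i) := by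
    obtain i | j := i
    · rw [obliqueEquiv_X_inl]
      cases i <;> simp [w, Polynomial.coeff_C]
    · rw [← rename_X Sum.inr j, obliqueEquiv_rename_inr]
      simp [w]
  have hcoeff := leadingCoeff_aeval hdeg (f := f)
  simp only [htop, ← comp_aeval_apply] at hcoeff
  have hf_aeval : obliqueEquiv v hv f = aeval (fun i => obliqueEquiv v hv (X i)) f :=
    DFunLike.congr_fun (aeval_unique (obliqueEquiv v hv).toAlgHom) f
  rw [hf_aeval]
  exact hcoeff ((map_ne_zero_iff _ (rename_injective _ Sum.inr_injective)).mpr ha)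

end Oblique

lemma exists_mem_ne_zero_of_span_ne_bot {A : Type*} [Semiring A] {S : Set A}
    (hS : Ideal.span S ≠ ⊥) : ∃ f ∈ S, f ≠ 0 := by
  by_contra! hzero
  exact hS (Ideal.span_eq_bot.mpr hzero)

section EliminationIdeal

variable {R τ τ' σ : Type*} [CommRing R]

/-- The elimination ideal `I ∩ R[σ]`: the polynomials in the variables `σ` that lie in `I` once
regarded as polynomials in all the variables. The variables indexed by `τ` are eliminated. -/
noncomputable def eliminationIdeal (I : Ideal (MvPolynomial (τ ⊕ σ) R)) :
    Ideal (MvPolynomial σ R) :=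
  I.comap (rename Sum.inr)

lemma mem_eliminationIdeal {I : Ideal (MvPolynomial (τ ⊕ σ) R)} {q : MvPolynomial σ R} :
    q ∈ eliminationIdeal I ↔ rename Sum.inr q ∈ I := Iff.rfl

lemma ne_bot_of_eliminationIdeal_ne_bot {I : Ideal (MvPolynomial (τ ⊕ σ) R)}
    (hI : eliminationIdeal I ≠ ⊥) : I ≠ ⊥ := by
  rintro rfl
  exact hI (Ideal.comap_bot_of_injective _ (rename_injective _ Sum.inr_injective))

lemma eliminationIdeal_span_rename_image (e : τ ≃ τ') (S : Set (MvPolynomial (τ ⊕ σ) R)) :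
    eliminationIdeal (Ideal.span (rename (Sum.map e id) '' S)) =
      eliminationIdeal (Ideal.span S) := by
  let E : MvPolynomial (τ ⊕ σ) R ≃ₐ[R] MvPolynomial (τ' ⊕ σ) R :=
    renameEquiv R (e.sumCongr (Equiv.refl σ))
  ext q
  have hq : rename Sum.inr q = E (rename Sum.inr q) := by
    simp [E, rename_rename, Function.comp_def]
  have hmap : Ideal.span (rename (Sum.map e id) '' S) = (Ideal.span S).map E :=
    (Ideal.map_span E S).symm
  rw [mem_eliminationIdeal, hmap, hq, ← Ideal.mem_comap,
    Ideal.comap_map_of_bijective _ E.bijective, mem_eliminationIdeal]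

lemma exists_mem_eliminationIdeal_of_isEmpty [IsEmpty τ] {S : Set (MvPolynomial (τ ⊕ σ) R)}
    (hbot : eliminationIdeal (Ideal.span S) ≠ ⊥) :
    ∃ g ∈ S, ∃ q ∈ eliminationIdeal (Ideal.span S), q ≠ 0 ∧ q.totalDegree ≤ g.totalDegree := by
  obtain ⟨g, hgS, hg⟩ :=
    exists_mem_ne_zero_of_span_ne_bot (ne_bot_of_eliminationIdeal_ne_bot hbot)
  let e : τ ⊕ σ ≃ σ := Equiv.emptySum τ σ
  refine ⟨g, hgS, rename e g, ?_, ?_, totalDegree_rename_le _ _⟩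
  · have he : Sum.inr ∘ e = id := e.symm_comp_self
    rw [mem_eliminationIdeal, rename_rename, he, rename_id_apply]
    exact Ideal.subset_span hgS
  · exact (map_ne_zero_iff _ (rename_injective _ e.injective)).mpr hg

end EliminationIdeal

section Elimination

variable {k τ σ : Type*} [Field k]

lemma C_rename_inr_mem_span_obliqueEquiv (v : Option τ → k) (hv : v none ≠ 0)
    {S : Set (MvPolynomial (Option τ ⊕ σ) k)} {q : MvPolynomial σ k} :
    Polynomial.C (rename Sum.inr q) ∈ Ideal.span
        (Submodule.span k (obliqueEquiv v hv '' S) : Set (Polynomial (MvPolynomial (τ ⊕ σ) k))) ↔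
      q ∈ eliminationIdeal (Ideal.span S) := by
  rw [Ideal.span, Submodule.span_span_of_tower, ← Ideal.span, ← obliqueEquiv_rename_inr v hv,
    ← Ideal.map_span, ← Ideal.mem_comap,
    Ideal.comap_map_of_bijective _ (obliqueEquiv v hv).bijective, mem_eliminationIdeal]

lemma exists_totalDegree_le_of_mem_span_obliqueEquiv (v : Option τ → k) (hv : v none ≠ 0) {d : ℕ}
    {S : Set (MvPolynomial (Option τ ⊕ σ) k)} (hS : ∀ g ∈ S, g.totalDegree ≤ d)
    {g : Polynomial (MvPolynomial (τ ⊕ σ) k)}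
    (hg : g ∈ Submodule.span k (obliqueEquiv v hv '' S)) :
    ∃ g', g'.totalDegree ≤ d ∧ obliqueEquiv v hv g' = g := by
  obtain ⟨g', hg', rfl⟩ : g ∈ (Submodule.span k S).map (obliqueEquiv v hv).toLinearMap := by
    rwa [Submodule.map_span]
  exact ⟨g', totalDegree_le_of_mem_span hS hg', rfl⟩

lemma exists_eliminationIdeal_le_of_option [Infinite k] {d : ℕ} (hd : d ≠ 0)
    {S : Set (MvPolynomial (Option τ ⊕ σ) k)} (hS : ∀ g ∈ S, g.totalDegree ≤ d)
    (hbot : eliminationIdeal (Ideal.span S) ≠ ⊥) :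
    ∃ T : Set (MvPolynomial (τ ⊕ σ) k), (∀ g ∈ T, g.totalDegree ≤ d * d) ∧
      eliminationIdeal (Ideal.span T) ≠ ⊥ ∧
      eliminationIdeal (Ideal.span T) ≤ eliminationIdeal (Ideal.span S) := by
  obtain ⟨b, hbS, hb⟩ := (Submodule.ne_bot_iff _).mp hbot
  obtain ⟨f, hfS, hf⟩ :=
    exists_mem_ne_zero_of_span_ne_bot (ne_bot_of_eliminationIdeal_ne_bot hbot)
  obtain ⟨v, hv, a, ha, hlead⟩ := exists_leadingCoeff_obliqueEquiv_eq_rename hf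
  let Φ := obliqueEquiv (σ := σ) v hv
  let V := Submodule.span k (Φ '' S)
  have hfV : Φ f ∈ V := Submodule.subset_span (Set.mem_image_of_mem Φ hfS)
  have hdeg : ∀ g ∈ V, g.natDegree ≤ d := by
    intro g hg
    obtain ⟨g, hgd, rfl⟩ := exists_totalDegree_le_of_mem_span_obliqueEquiv v hv hS hg
    exact (natDegree_obliqueEquiv_le v hv g).trans hgd
  refine ⟨(fun g => Polynomial.resultant (Φ f) g (Φ f).natDegree d) '' V, ?_, ?_, fun q hq => ?_⟩
  · rintro _ ⟨g, hg, rfl⟩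
    obtain ⟨g, hgd, rfl⟩ := exists_totalDegree_le_of_mem_span_obliqueEquiv v hv hS hg
    exact totalDegree_resultant_le
      (fun i hi => (totalDegree_coeff_obliqueEquiv_le v hv hi).trans (hS f hfS))
      (fun i hi => (totalDegree_coeff_obliqueEquiv_le v hv hi).trans hgd) _
  · obtain ⟨N, hN⟩ := leadingCoeff_mul_mem_radical_resultantIdeal hdeg (Φ f)
      ((C_rename_inr_mem_span_obliqueEquiv v hv).mpr hbS)
    refine (Submodule.ne_bot_iff _).mpr ⟨(a * b) ^ N, ?_, pow_ne_zero _ (mul_ne_zero ha hb)⟩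
    rw [mem_eliminationIdeal, map_pow, map_mul, ← hlead]
    exact hN
  · rw [← C_rename_inr_mem_span_obliqueEquiv v hv]
    exact resultantIdeal_le_comap_C (Ideal.subset_span hfV) Ideal.subset_span hd hdeg hq

theorem exists_mem_eliminationIdeal_totalDegree_le [Infinite k] [Finite τ] {d : ℕ} (hd : d ≠ 0)
    {S : Set (MvPolynomial (τ ⊕ σ) k)} (hS : ∀ g ∈ S, g.totalDegree ≤ d)
    (hbot : eliminationIdeal (Ideal.span S) ≠ ⊥) :
    ∃ q ∈ eliminationIdeal (Ideal.span S), q ≠ 0 ∧ q.totalDegree ≤ d ^ 2 ^ Nat.card τ := by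
  induction τ using Finite.induction_empty_option generalizing d with
  | of_equiv e ih =>
    have hS' : ∀ g ∈ rename (Sum.map e.symm id) '' S, g.totalDegree ≤ d := by
      rintro _ ⟨g, hg, rfl⟩
      exact (totalDegree_rename_le _ g).trans (hS g hg)
    rw [← eliminationIdeal_span_rename_image e.symm] at hbot ⊢
    rw [← Nat.card_congr e]
    exact ih hd hS' hbot
  | h_empty =>
    obtain ⟨g, hg, q, hqS, hq, hqg⟩ := exists_mem_eliminationIdeal_of_isEmpty hbot
    exact ⟨q, hqS, hq, by simpa using hqg.trans (hS g hg)⟩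
  | h_option ih =>
    obtain ⟨T, hT, hTbot, hTS⟩ := exists_eliminationIdeal_le_of_option hd hS hbot
    obtain ⟨q, hqT, hq, hdeg⟩ := ih (mul_ne_zero hd hd) hT hTbot
    refine ⟨q, hTS hqT, hq, hdeg.trans_eq ?_⟩
    rw [Finite.card_option, ← pow_two, ← pow_mul, pow_succ']

end Elimination

section Graph

variable {R σ τ : Type*} [CommRing R]

/-- Generators of the ideal of the graph of `s` over the zero set of `S`: the polynomials in `S`
together with `yᵢ - sᵢ`, where the variable `yᵢ` is `X (Sum.inr i)`. -/
def graphRelations (s : σ → MvPolynomial τ R) (S : Set (MvPolynomial τ R)) :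
    Set (MvPolynomial (τ ⊕ σ) R) :=
  rename Sum.inl '' S ∪ Set.range fun i => X (Sum.inr i) - rename Sum.inl (s i)

lemma rename_inr_sub_rename_inl_aeval_mem (s : σ → MvPolynomial τ R) (S : Set (MvPolynomial τ R))
    (q : MvPolynomial σ R) :
    rename Sum.inr q - rename Sum.inl (aeval s q) ∈ Ideal.span (graphRelations s S) := by
  let mk := Ideal.Quotient.mkₐ R (Ideal.span (graphRelations s S))
  have hmk : mk.comp (rename Sum.inr) = (mk.comp (rename Sum.inl)).comp (aeval s) := by
    ext i
    simp only [AlgHom.comp_apply, rename_X, aeval_X]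
    exact Ideal.Quotient.eq.mpr (Ideal.subset_span (Or.inr ⟨i, rfl⟩))
  exact Ideal.Quotient.eq.mp (DFunLike.congr_fun hmk q)

lemma eliminationIdeal_span_graphRelations (s : σ → MvPolynomial τ R)
    (S : Set (MvPolynomial τ R)) :
    eliminationIdeal (Ideal.span (graphRelations s S)) = (Ideal.span S).comap (aeval s) := by
  have hinl : (Ideal.span S).map (rename Sum.inl) ≤ Ideal.span (graphRelations s S) := by
    rw [Ideal.map_span]
    exact Ideal.span_mono Set.subset_union_left
  have hsub : Ideal.span (graphRelations s S) ≤ (Ideal.span S).comap (aeval (Sum.elim X s)) := by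
    rw [Ideal.span_le]
    rintro _ (⟨g, hg, rfl⟩ | ⟨i, rfl⟩)
    · rw [SetLike.mem_coe, Ideal.mem_comap, aeval_rename, Sum.elim_comp_inl, aeval_X_left_apply]
      exact Ideal.subset_span hg
    · rw [SetLike.mem_coe, Ideal.mem_comap, map_sub, aeval_X, Sum.elim_inr, aeval_rename,
        Sum.elim_comp_inl, aeval_X_left_apply, sub_self]
      exact zero_mem _
  ext q
  constructor
  · intro hq
    have hq' := hsub hq
    rwa [Ideal.mem_comap, aeval_rename, Sum.elim_comp_inr] at hq'
  · intro hq
    have hgraph := rename_inr_sub_rename_inl_aeval_mem s S q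
    exact (Submodule.sub_mem_iff_left _ (hinl (Ideal.mem_map_of_mem _ hq))).mp hgraph

lemma totalDegree_le_of_mem_graphRelations {s : σ → MvPolynomial τ R} {S : Set (MvPolynomial τ R)}
    {d : ℕ} (hd : 1 ≤ d) (hs : ∀ i, (s i).totalDegree ≤ d) (hS : ∀ g ∈ S, g.totalDegree ≤ d) :
    ∀ g ∈ graphRelations s S, g.totalDegree ≤ d := by
  rintro _ (⟨g, hg, rfl⟩ | ⟨i, rfl⟩)
  · exact (totalDegree_rename_le _ g).trans (hS g hg)
  · exact (totalDegree_sub _ _).trans <| max_le ((isHomogeneous_X R _).totalDegree_le.trans hd) <|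
      (totalDegree_rename_le _ _).trans (hs i)

end Graph


theorem exists_aeval_mem_totalDegree_le_of_infinite {k σ τ : Type*} [Field k] [Infinite k]
    [Finite τ] {d : ℕ} (hd : 1 ≤ d) {S : Set (MvPolynomial τ k)} (hS : ∀ g ∈ S, g.totalDegree ≤ d)
    {s : σ → MvPolynomial τ k} (hs : ∀ i, (s i).totalDegree ≤ d)
    (hex : ∃ p : MvPolynomial σ k, p ≠ 0 ∧ aeval s p ∈ Ideal.span S) :
    ∃ q : MvPolynomial σ k, q ≠ 0 ∧ q.totalDegree ≤ d ^ 2 ^ Nat.card τ ∧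
      aeval s q ∈ Ideal.span S := by
  have hbot : eliminationIdeal (Ideal.span (graphRelations s S)) ≠ ⊥ := by
    obtain ⟨p, hp, hpS⟩ := hex
    rw [eliminationIdeal_span_graphRelations, Submodule.ne_bot_iff]
    exact ⟨p, hpS, hp⟩
  obtain ⟨q, hqS, hq, hdeg⟩ := exists_mem_eliminationIdeal_totalDegree_le
    (Nat.one_le_iff_ne_zero.mp hd) (totalDegree_le_of_mem_graphRelations hd hs hS) hbot
  rw [eliminationIdeal_span_graphRelations] at hqS
  exact ⟨q, hq, hdeg, hqS⟩

section Descent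

variable {R A σ τ : Type*} [CommRing R] [CommRing A] [Algebra R A]

/-- Application of a linear map `l` to every coefficient of a polynomial, used to descend from `A`
to `R`. It is the analogue of `MvPolynomial.map` for an `l` that need not be multiplicative. -/
noncomputable def mapCoeff (l : A →ₗ[R] R) : MvPolynomial σ A →ₗ[R] MvPolynomial σ R where
  toFun := AddMonoidAlgebra.map l.toAddMonoidHom
  map_add' f g := AddMonoidAlgebra.map_add _ f g
  map_smul' a f := by ext; simp [coeff]

lemma coeff_mapCoeff (l : A →ₗ[R] R) (f : MvPolynomial σ A) (α : σ →₀ ℕ) :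
    coeff α (mapCoeff l f) = l (coeff α f) := rfl

lemma totalDegree_mapCoeff_le (l : A →ₗ[R] R) (f : MvPolynomial σ A) :
    (mapCoeff l f).totalDegree ≤ f.totalDegree := by
  refine Finset.sup_mono fun α hα => ?_
  rw [mem_support_iff] at hα ⊢
  exact fun h => hα (by rw [coeff_mapCoeff, h, map_zero])

lemma exists_mapCoeff_ne_zero [Module.Projective R A] {f : MvPolynomial σ A} (hf : f ≠ 0) :
    ∃ l : A →ₗ[R] R, mapCoeff l f ≠ 0 := by
  obtain ⟨α, hα⟩ := ne_zero_iff.mp hf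
  obtain ⟨l, hl⟩ := Module.Projective.exists_dual_ne_zero R hα
  exact ⟨l, ne_zero_iff.mpr ⟨α, hl⟩⟩

lemma mapCoeff_mul_map (l : A →ₗ[R] R) (f : MvPolynomial σ A) (g : MvPolynomial σ R) :
    mapCoeff l (f * map (algebraMap R A) g) = mapCoeff l f * g := by
  ext α
  classical
  rw [coeff_mapCoeff, coeff_mul, coeff_mul, map_sum]
  refine Finset.sum_congr rfl fun β _ => ?_
  rw [coeff_map, mul_comm, ← Algebra.smul_def, map_smul, smul_eq_mul, coeff_mapCoeff, mul_comm]

lemma mapCoeff_C (l : A →ₗ[R] R) (a : A) :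
    mapCoeff l (C a : MvPolynomial σ A) = C (l a) := by
  classical
  ext α
  rw [coeff_mapCoeff, coeff_C, coeff_C, apply_ite l, map_zero]

lemma mapCoeff_mem_span (l : A →ₗ[R] R) {S : Set (MvPolynomial σ R)} {f : MvPolynomial σ A}
    (hf : f ∈ Ideal.span (map (algebraMap R A) '' S)) : mapCoeff l f ∈ Ideal.span S := by
  induction hf using Submodule.closure_induction with
  | zero => simp
  | add f g _ _ hf hg =>
    rw [map_add]
    exact add_mem hf hg
  | smul_mem f g hg =>
    obtain ⟨g, hg, rfl⟩ := hg
    rw [smul_eq_mul, mapCoeff_mul_map]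
    exact Ideal.mul_mem_left _ _ (Ideal.subset_span hg)

lemma mapCoeff_aeval (l : A →ₗ[R] R) (s : σ → MvPolynomial τ R) (q : MvPolynomial σ A) :
    mapCoeff l (aeval (fun i => map (algebraMap R A) (s i)) q) = aeval s (mapCoeff l q) := by
  induction q using induction_on with
  | C a => rw [mapCoeff_C, aeval_C, aeval_C, algebraMap_eq, mapCoeff_C, algebraMap_eq]
  | add p q hp hq => simp only [map_add, hp, hq]
  | mul_X p i hp =>
    rw [map_mul, aeval_X, mapCoeff_mul_map, hp, ← map_X (algebraMap R A), mapCoeff_mul_map, map_mul,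
      aeval_X]

lemma map_aeval_eq_aeval_map (s : σ → MvPolynomial τ R) (q : MvPolynomial σ R) :
    map (algebraMap R A) (aeval s q) =
      aeval (fun i => map (algebraMap R A) (s i)) (map (algebraMap R A) q) := by
  rw [aeval_map_algebraMap]
  exact comp_aeval_apply s (mapAlgHom (Algebra.ofId R A)) q

end Descent

theorem bounded_annihilating_polynomial_general {k σ τ : Type*} [Field k] [Finite τ] {d : ℕ}
    (hd : 1 ≤ d) {S : Set (MvPolynomial τ k)} (hS : ∀ g ∈ S, g.totalDegree ≤ d)
    {s : σ → MvPolynomial τ k} (hs : ∀ i, (s i).totalDegree ≤ d)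
    (hex : ∃ p : MvPolynomial σ k, p ≠ 0 ∧ aeval s p ∈ Ideal.span S) :
    ∃ q : MvPolynomial σ k, q ≠ 0 ∧ q.totalDegree ≤ d ^ 2 ^ Nat.card τ ∧
      aeval s q ∈ Ideal.span S := by
  let φ := algebraMap k (AlgebraicClosure k)
  have hSφ : ∀ g ∈ map φ '' S, g.totalDegree ≤ d := by
    rintro _ ⟨g, hg, rfl⟩
    exact (totalDegree_map_le φ g).trans (hS g hg)
  have hexφ : ∃ p : MvPolynomial σ (AlgebraicClosure k), p ≠ 0 ∧
      aeval (fun i => map φ (s i)) p ∈ Ideal.span (map φ '' S) := by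
    obtain ⟨p, hp, hpS⟩ := hex
    refine ⟨map φ p, (map_ne_zero_iff _ (map_injective φ φ.injective)).mpr hp, ?_⟩
    rw [← map_aeval_eq_aeval_map, ← Ideal.map_span]
    exact Ideal.mem_map_of_mem _ hpS
  obtain ⟨q, hq, hdeg, hqS⟩ := exists_aeval_mem_totalDegree_le_of_infinite hd hSφ
    (fun i => (totalDegree_map_le φ (s i)).trans (hs i)) hexφ
  obtain ⟨l, hl⟩ := exists_mapCoeff_ne_zero (R := k) hq
  refine ⟨mapCoeff l q, hl, (totalDegree_mapCoeff_le l q).trans hdeg, ?_⟩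
  rw [← mapCoeff_aeval]
  exact mapCoeff_mem_span l hqS

/-- If some nonzero polynomial `p ∈ k[x₁,…,x_r][Y]` vanishes at `u`
modulo `I` (i.e. `p(u) ∈ I`), then some nonzero `q ∈ k[x₁,…,x_r][Y]` of total degree at
most `2·d^(2^(n+1))` satisfies `q(u) ∈ I`.  Here `k[x₁,…,x_r][Y]` is modelled as
`MvPolynomial (Fin (r+1)) k` with the last variable playing the role of `Y`, and
substitution sends `xᵢ ↦ xᵢ` and `Y ↦ u`. -/
theorem bounded_annihilating_polynomial
    (k : Type*) [Field k] (n d r : ℕ) (hn : 1 ≤ n) (hd : 1 ≤ d) (hr : r ≤ n)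
    (I : Ideal (MvPolynomial (Fin n) k))
    (S : Set (MvPolynomial (Fin n) k)) (hgen : I = Ideal.span S)
    (hdeg : ∀ g ∈ S, g.totalDegree ≤ d)
    (u : MvPolynomial (Fin n) k) (hu : u.totalDegree ≤ d)
    (hex : ∃ p : MvPolynomial (Fin (r + 1)) k, p ≠ 0 ∧
      MvPolynomial.aeval (fun i : Fin (r + 1) =>
        if h : (i : ℕ) < r then (MvPolynomial.X ⟨(i : ℕ), lt_of_lt_of_le h hr⟩ :
          MvPolynomial (Fin n) k) else u) p ∈ I) :
    ∃ q : MvPolynomial (Fin (r + 1)) k, q ≠ 0 ∧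
      q.totalDegree ≤ 2 * d ^ 2 ^ (n + 1) ∧
      MvPolynomial.aeval (fun i : Fin (r + 1) =>
        if h : (i : ℕ) < r then (MvPolynomial.X ⟨(i : ℕ), lt_of_lt_of_le h hr⟩ :
          MvPolynomial (Fin n) k) else u) q ∈ I := by
  subst hgen
  obtain ⟨q, hq, hqdeg, hqS⟩ := bounded_annihilating_polynomial_general hd hdeg (fun i => by
    split_ifs
    exacts [(totalDegree_X _).trans_le hd, hu]) hex
  refine ⟨q, hq, hqdeg.trans ?_, hqS⟩
  calc d ^ 2 ^ Nat.card (Fin n) = d ^ 2 ^ n := by rw [Nat.card_fin]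
    _ ≤ d ^ 2 ^ (n + 1) :=
      Nat.pow_le_pow_right hd (Nat.pow_le_pow_right two_pos n.le_succ)
    _ ≤ 2 * d ^ 2 ^ (n + 1) := Nat.le_mul_of_pos_left _ two_pos
end

section
/- Let k be a field, n ≥ 1 and d ≥ 1 natural numbers, let I be an ideal of k[x_1,…,x_n] generated by polynomials of total degree at most d, and fix i with 1 ≤ i ≤ n. If f ∈ k[x_i] is an irreducible polynomial in the single variable x_i and there exists g ∈ k[x_1,…,x_n] such that f·g ∈ I but g ∉ I, then the degree of f is at most 2^(n·2^(2n+6))·d^(n·2^(3n+2)). -/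
/-! Let `R = k[xᵢ]` and `K = R/(f)`, and let `h₁, …, hₜ` generate `I`. If `f g = ∑ hⱼ aⱼ`, then
the `aⱼ` reduced modulo `f` are a syzygy of the reduced `hⱼ` over the field `K`. By Hermann's
theorem the syzygies over `K` are generated by syzygies of degree at most `(2d)^(2^N)`, where `N` is
the number of the variables other than `xᵢ`. Syzygies of that degree are the kernel of a matrix over
`R`; if `deg f` exceeds the degrees of its minors, its rank does not drop modulo `f`, so every
syzygy over `K` lifts to a syzygy `a'` over `R`. Then `a - a' = f b` and `g = ∑ hⱼ bⱼ ∈ I`.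

Hermann's bound is obtained by eliminating one variable at a time: after a linear change of
coordinates a maximal minor `δ` of the system has a unit as leading coefficient in that variable,
and division by `δ`, whose multiples give syzygies by Cramer's rule, leaves solutions of bounded
degree in it, which solve a larger system in the remaining variables. The change of coordinates
needs an infinite field; a linear retraction of the algebraic closure onto the field descends the
bound. -/

open Matrix MvPolynomial

/-! ### Generalized inverses with entries of bounded degree -/

section GradedMinors

variable {k R : Type*} [CommRing k] [CommRing R] [Module k R] {F : ℕ → Submodule k R}
  [SetLike.GradedMonoid F] {d : ℕ}

lemma det_mem_graded {m : Type*} [Fintype m] [DecidableEq m] (S : Matrix m m R)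
    (hS : ∀ i j, S i j ∈ F d) : S.det ∈ F (Fintype.card m * d) := by
  rw [det_apply]
  refine Submodule.sum_mem _ fun σ _ => ?_
  have hprod : ∏ i, S (σ i) i ∈ F (∑ _i : m, d) :=
    SetLike.prod_mem_graded F _ _ fun i _ => hS (σ i) i
  rw [Units.smul_def]
  exact zsmul_mem (by simpa using hprod) _

lemma adjugate_mul_submatrix_mem_graded {ι κ m : Type*} [Fintype m] [DecidableEq m]
    (A : Matrix ι κ R) (hA : ∀ i j, A i j ∈ F d) (ρ : m → ι) (c : m → κ) (x : m) (j : κ) :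
    ((A.submatrix ρ c).adjugate * A.submatrix ρ id) x j ∈ F (Fintype.card m * d) := by
  have hcramer : ((A.submatrix ρ c).adjugate * A.submatrix ρ id) x j =
      ((A.submatrix ρ c).updateCol x fun y => A (ρ y) j).det := by
    rw [← cramer_apply, cramer_eq_adjugate_mulVec]
    rfl
  rw [hcramer]
  refine det_mem_graded _ fun y z => ?_
  rw [updateCol_apply]
  split_ifs <;> exact hA _ _

end GradedMinors

section GeneralizedInverse

variable {R : Type*} [CommRing R] {ι κ : Type*}

lemma submatrix_mul_adjugate_mul_submatrix [IsDomain R] {m : Type*} [Fintype m] [DecidableEq m]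
    (A : Matrix ι κ R) (ρ : m → ι) (c : m → κ) (hdet : (A.submatrix ρ c).det ≠ 0)
    (hborder : ∀ i j,
      (A.submatrix (Sum.elim ρ fun _ : Unit => i) (Sum.elim c fun _ : Unit => j)).det = 0) :
    A.submatrix id c * (A.submatrix ρ c).adjugate * A.submatrix ρ id =
      (A.submatrix ρ c).det • A := by
  ext i j
  set S := A.submatrix ρ c
  set u : Matrix m Unit R := A.submatrix ρ fun _ => j
  set v : Matrix Unit m R := A.submatrix (fun _ => i) c
  set a : Matrix Unit Unit R := A.submatrix (fun _ => i) fun _ => j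
  have hzero : (fromBlocks S u v a).det = 0 := by
    rw [← hborder i j]
    congr 1
    ext (x | x) (y | y) <;> rfl
  have heliminate : fromBlocks 1 0 (-(v * S.adjugate)) (S.det • 1) * fromBlocks S u v a =
      fromBlocks S u 0 (S.det • a - v * S.adjugate * u) := by
    rw [fromBlocks_multiply]
    congr 1 <;> simp [Matrix.mul_assoc, adjugate_mul, neg_add_eq_sub]
  have hschur : (S.det • a - v * S.adjugate * u).det = 0 := by
    have h := congrArg det heliminate
    rw [det_mul, hzero, mul_zero, det_fromBlocks_zero₂₁] at h
    exact (mul_eq_zero.mp h.symm).resolve_left hdet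
  rw [det_unique, Matrix.sub_apply, sub_eq_zero] at hschur
  exact hschur.symm

lemma exists_maximal_minor [Nontrivial R] [Fintype ι] (A : Matrix ι κ R) :
    ∃ r ≤ Fintype.card ι, ∃ (ρ : Fin r → ι) (c : Fin r → κ), (A.submatrix ρ c).det ≠ 0 ∧
      ∀ i j, (A.submatrix (Sum.elim ρ fun _ : Unit => i)
        (Sum.elim c fun _ : Unit => j)).det = 0 := by
  classical
  let HasMinor (r : ℕ) : Prop := ∃ (ρ : Fin r → ι) (c : Fin r → κ), (A.submatrix ρ c).det ≠ 0
  have hle {r : ℕ} : HasMinor r → r ≤ Fintype.card ι := by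
    rintro ⟨ρ, c, h⟩
    have hinj : Function.Injective ρ := fun x y hxy => by
      by_contra hne
      exact h (det_zero_of_row_eq hne (by ext z; simp [hxy]))
    simpa using Fintype.card_le_of_injective ρ hinj
  have hzero : HasMinor 0 := ⟨Fin.elim0, Fin.elim0, by simp⟩
  set r := Nat.findGreatest HasMinor (Fintype.card ι)
  obtain ⟨ρ, c, h⟩ : HasMinor r := Nat.findGreatest_spec (Nat.zero_le _) hzero
  refine ⟨r, hle ⟨ρ, c, h⟩, ρ, c, h, fun i j => ?_⟩
  by_contra hne
  let e : Fin (r + 1) ≃ Fin r ⊕ Unit := finSuccEquivLast.trans (Equiv.optionEquivSumPUnit _)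
  have hsucc : HasMinor (r + 1) :=
    ⟨(Sum.elim ρ fun _ : Unit => i) ∘ e, (Sum.elim c fun _ : Unit => j) ∘ e, by
      rwa [← submatrix_submatrix, det_submatrix_equiv_self]⟩
  exact (Nat.lt_succ_self r).not_ge (Nat.le_findGreatest (hle hsucc) hsucc)

/- If `S` is a maximal nonsingular square submatrix of `A`, take `δ = det S`, and `W = adj S` padded
by zeros; the entries of `W * A` are then minors of `A` by Cramer's rule. -/
lemma exists_generalized_inverse [IsDomain R] [Fintype ι] [Fintype κ] {k : Type*} [CommRing k]
    [Module k R] {F : ℕ → Submodule k R} [SetLike.GradedMonoid F] (hF : Monotone F) {d : ℕ}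
    (A : Matrix ι κ R) (hA : ∀ i j, A i j ∈ F d) :
    ∃ δ ∈ F (Fintype.card ι * d), δ ≠ 0 ∧ ∃ W : Matrix κ ι R, A * W * A = δ • A ∧
      ∀ i j, (W * A) i j ∈ F (Fintype.card ι * d) := by
  classical
  obtain ⟨r, hr, ρ, c, hdet, hborder⟩ := exists_maximal_minor A
  have hle : F (Fintype.card (Fin r) * d) ≤ F (Fintype.card ι * d) :=
    hF (Nat.mul_le_mul_right d (by simpa using hr))
  set W := (1 : Matrix κ κ R).submatrix id c * (A.submatrix ρ c).adjugate *
    (1 : Matrix ι ι R).submatrix ρ id with hW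
  have hrows : (1 : Matrix ι ι R).submatrix ρ id * A = A.submatrix ρ id :=
    one_submatrix_mul ρ (Equiv.refl ι) A
  have hcols : A * (1 : Matrix κ κ R).submatrix id c = A.submatrix id c :=
    mul_submatrix_one (Equiv.refl κ) c A
  have hWA : W * A = (1 : Matrix κ κ R).submatrix id c *
      ((A.submatrix ρ c).adjugate * A.submatrix ρ id) := by
    rw [hW, Matrix.mul_assoc, hrows, Matrix.mul_assoc]
  refine ⟨_, hle (det_mem_graded _ fun i j => hA _ _), hdet, W, ?_, fun i j => ?_⟩
  · rw [Matrix.mul_assoc, hWA, ← Matrix.mul_assoc, hcols, ← Matrix.mul_assoc]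
    exact submatrix_mul_adjugate_mul_submatrix A ρ c hdet hborder
  · rw [hWA, mul_apply]
    refine Submodule.sum_mem _ fun x _ => ?_
    rw [submatrix_apply, one_apply, ite_mul, one_mul, zero_mul]
    split_ifs
    · exact hle (adjugate_mul_submatrix_mem_graded A hA ρ c x j)
    · exact Submodule.zero_mem _

end GeneralizedInverse

instance gradedMonoid_restrictTotalDegree {k σ : Type*} [CommSemiring k] :
    SetLike.GradedMonoid fun d => restrictTotalDegree σ k d where
  one_mem := by simp [mem_restrictTotalDegree]
  mul_mem _ _ _ _ hp hq := by
    rw [mem_restrictTotalDegree] at hp hq ⊢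
    exact (totalDegree_mul _ _).trans (add_le_add hp hq)

lemma monotone_restrictTotalDegree (σ k : Type*) [CommSemiring k] :
    Monotone fun d => restrictTotalDegree σ k d := fun d d' h p hp => by
  rw [mem_restrictTotalDegree] at hp ⊢
  exact hp.trans h

instance gradedMonoid_degreeLE {k : Type*} [CommRing k] :
    SetLike.GradedMonoid fun d : ℕ => Polynomial.degreeLE k d where
  one_mem := by simp [Polynomial.mem_degreeLE]
  mul_mem _ _ _ _ hp hq := by
    rw [Polynomial.mem_degreeLE] at hp hq ⊢
    exact Polynomial.degree_mul_le_of_le hp hq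

lemma monotone_degreeLE (k : Type*) [CommRing k] : Monotone fun d : ℕ => Polynomial.degreeLE k d :=
  fun _ _ h => Polynomial.degreeLE_mono (by exact_mod_cast h)

/-! ### Linear changes of coordinates -/

section LinearSubstitution

lemma totalDegree_bind₁_le {R σ τ : Type*} [CommSemiring R] {v : σ → MvPolynomial τ R}
    (hv : ∀ j, (v j).totalDegree ≤ 1) (p : MvPolynomial σ R) :
    (bind₁ v p).totalDegree ≤ p.totalDegree := by
  rw [bind₁, aeval_def, eval₂_eq]
  refine totalDegree_finsetSum_le fun m hm => ?_
  calc (algebraMap R (MvPolynomial τ R) (coeff m p) * ∏ j ∈ m.support, v j ^ m j).totalDegree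
      ≤ ∑ j ∈ m.support, (v j ^ m j).totalDegree := by
        refine (totalDegree_mul _ _).trans ?_
        rw [algebraMap_eq, totalDegree_C, zero_add]
        exact totalDegree_finsetProd _ _
    _ ≤ ∑ j ∈ m.support, m j := Finset.sum_le_sum fun j _ =>
        (totalDegree_pow _ _).trans (by simpa using Nat.mul_le_mul_left (m j) (hv j))
    _ ≤ p.totalDegree := le_totalDegree hm

/-- The linear change of coordinates of `R[xⱼ : j ∈ τ]` given by an invertible matrix `M`: the
variable `xⱼ` is replaced by the linear form `∑ᵢ Mⱼᵢ xᵢ`. -/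
noncomputable def linearSubst {R τ : Type*} [CommRing R] [Fintype τ] [DecidableEq τ]
    (M : GL τ R) : MvPolynomial τ R ≃ₐ[R] MvPolynomial τ R :=
  AlgEquiv.ofAlgHom (bind₁ M.val.toMvPolynomial) (bind₁ M⁻¹.val.toMvPolynomial)
    (MvPolynomial.algHom_ext fun j => by
      rw [AlgHom.comp_apply, bind₁_X_right, ← toMvPolynomial_mul, ← Units.val_mul, inv_mul_cancel,
        Units.val_one, toMvPolynomial_one]
      rfl)
    (MvPolynomial.algHom_ext fun j => by
      rw [AlgHom.comp_apply, bind₁_X_right, ← toMvPolynomial_mul, ← Units.val_mul, mul_inv_cancel,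
        Units.val_one, toMvPolynomial_one]
      rfl)

section

variable {R τ : Type*} [CommRing R] [Fintype τ] [DecidableEq τ] (M : GL τ R)

lemma totalDegree_linearSubst_le (p : MvPolynomial τ R) :
    (linearSubst M p).totalDegree ≤ p.totalDegree :=
  totalDegree_bind₁_le (toMvPolynomial_totalDegree_le M.val) p

lemma totalDegree_linearSubst_symm_le (p : MvPolynomial τ R) :
    ((linearSubst M).symm p).totalDegree ≤ p.totalDegree :=
  totalDegree_bind₁_le (toMvPolynomial_totalDegree_le M⁻¹.val) p

lemma totalDegree_linearSubst (p : MvPolynomial τ R) :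
    (linearSubst M p).totalDegree = p.totalDegree :=
  (totalDegree_linearSubst_le M p).antisymm <| by
    simpa using totalDegree_linearSubst_symm_le M (linearSubst M p)

lemma map_constantCoeff_optionEquivLeft_linearSubst {σ : Type*} [Fintype σ] [DecidableEq σ]
    (M : GL (Option σ) R) (p : MvPolynomial (Option σ) R) :
    (optionEquivLeft R σ (linearSubst M p)).map constantCoeff =
      aeval (fun j => Polynomial.C (M.val j none) * Polynomial.X) p := by
  have hcomp : ((Polynomial.mapAlgHom (aeval fun _ => 0)).comp
      (optionEquivLeft R σ).toAlgHom).comp (linearSubst M).toAlgHom =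
        aeval fun j => Polynomial.C (M.val j none) * Polynomial.X := by
    refine MvPolynomial.algHom_ext fun j => ?_
    simp [linearSubst, toMvPolynomial, ← C_mul_X_eq_monomial, Polynomial.map_sum]
  rw [← hcomp]
  simp only [AlgHom.comp_apply, Polynomial.coe_mapAlgHom]
  congr 1
  exact MvPolynomial.ringHom_ext (fun r => by simp) fun j => by simp

end

lemma coeff_aeval_C_mul_X {R σ : Type*} [CommSemiring R] (a : σ → R) (D : ℕ)
    (p : MvPolynomial σ R) :
    (aeval (fun j => Polynomial.C (a j) * Polynomial.X) p : Polynomial R).coeff D =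
      eval a (homogeneousComponent D p) := by
  induction p using MvPolynomial.induction_on' with
  | monomial m r =>
    have haeval : (aeval (fun j => Polynomial.C (a j) * Polynomial.X) (monomial m r) :
        Polynomial R) = Polynomial.C (eval a (monomial m r)) * Polynomial.X ^ m.degree := by
      simp [aeval_monomial, eval_monomial, mul_pow, Finsupp.prod, Finset.prod_mul_distrib,
        Finset.prod_pow_eq_pow_sum, Finsupp.degree_apply, mul_assoc]
    rw [haeval, homogeneousComponent_of_mem (isHomogeneous_monomial r rfl),
      Polynomial.coeff_C_mul_X_pow]
    split_ifs <;> simp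
  | add p q hp hq => simp [hp, hq]

lemma homogeneousComponent_totalDegree_ne_zero {R σ : Type*} [CommSemiring R]
    {p : MvPolynomial σ R} (hp : p ≠ 0) : homogeneousComponent p.totalDegree p ≠ 0 := by
  obtain ⟨m, hm, hdeg⟩ := Finset.exists_mem_eq_sup p.support (support_nonempty.mpr hp)
    fun m => m.sum fun _ e => e
  refine ne_zero_iff.mpr ⟨m, ?_⟩
  rw [coeff_homogeneousComponent, if_pos (show m.degree = p.totalDegree from hdeg.symm)]
  exact mem_support_iff.mp hm

lemma natDegree_optionEquivLeft_le {R σ : Type*} [CommSemiring R]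
    (p : MvPolynomial (Option σ) R) : (optionEquivLeft R σ p).natDegree ≤ p.totalDegree :=
  (natDegree_optionEquivLeft R p).trans_le (degreeOf_le_totalDegree _ _)

lemma isUnit_leadingCoeff_optionEquivLeft {K σ : Type*} [Field K] {p : MvPolynomial (Option σ) K}
    (hp : constantCoeff ((optionEquivLeft K σ p).coeff p.totalDegree) ≠ 0) :
    IsUnit (optionEquivLeft K σ p).leadingCoeff := by
  set q := optionEquivLeft K σ p
  have hnatDegree : q.natDegree = p.totalDegree :=
    (natDegree_optionEquivLeft_le p).antisymm <|
      Polynomial.le_natDegree_of_ne_zero fun h => hp (by rw [h, map_zero])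
  have hconst : (q.coeff p.totalDegree).totalDegree = 0 := by
    have : (q.coeff p.totalDegree).totalDegree + p.totalDegree ≤ p.totalDegree :=
      totalDegree_coeff_optionEquivLeft_add_le K σ p _ le_rfl
    omega
  rw [Polynomial.leadingCoeff, hnatDegree, totalDegree_eq_zero_iff_eq_C.mp hconst]
  exact (isUnit_iff_ne_zero.mpr hp).map C

lemma exists_GL_col_eq {K τ : Type*} [Field K] [Fintype τ] [DecidableEq τ] (i : τ) (a : τ → K)
    (ha : a i ≠ 0) : ∃ M : GL τ K, ∀ j, M.val j i = a j := by
  have hdet : ((1 : Matrix τ τ K).updateCol i a).det ≠ 0 := by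
    rwa [← cramer_apply, cramer_one]
  exact ⟨GeneralLinearGroup.mkOfDetNeZero _ hdet, fun j => updateCol_self⟩

/- The column `none` of `M` is chosen off the zero locus of the top homogeneous component of `p`. -/
lemma exists_linearSubst_isUnit_leadingCoeff {K σ : Type*} [Field K] [Infinite K] [Fintype σ]
    [DecidableEq σ] {p : MvPolynomial (Option σ) K} (hp : p ≠ 0) :
    ∃ M : GL (Option σ) K, IsUnit (optionEquivLeft K σ (linearSubst M p)).leadingCoeff := by
  set top := homogeneousComponent p.totalDegree p
  obtain ⟨a, ha⟩ : ∃ a, eval a (X none * top) ≠ 0 := by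
    by_contra! h
    exact mul_ne_zero (X_ne_zero none) (homogeneousComponent_totalDegree_ne_zero hp)
      (MvPolynomial.funext fun a => by simpa using h a)
  rw [map_mul, eval_X] at ha
  obtain ⟨M, hM⟩ := exists_GL_col_eq none a (left_ne_zero_of_mul ha)
  refine ⟨M, isUnit_leadingCoeff_optionEquivLeft ?_⟩
  rw [totalDegree_linearSubst, ← Polynomial.coeff_map,
    map_constantCoeff_optionEquivLeft_linearSubst]
  simp only [hM]
  rw [coeff_aeval_C_mul_X]
  exact right_ne_zero_of_mul ha

end LinearSubstitution

/-! ### Syzygies of bounded degree -/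

section Entrywise

/-- A ring homomorphism applied to all entries of a vector, as a semilinear map. -/
def entrywise {R S : Type*} [Semiring R] [Semiring S] (φ : R →+* S) (κ : Type*) :
    (κ → R) →ₛₗ[φ] (κ → S) where
  toFun y := φ ∘ y
  map_add' y z := funext fun j => map_add φ (y j) (z j)
  map_smul' c y := funext fun j => map_mul φ c (y j)

variable {R S ι κ : Type*} [CommRing R] [CommRing S] [Fintype κ]

lemma entrywise_mulVec (φ : R →+* S) (A : Matrix ι κ R) (y : κ → R) :
    entrywise φ ι (A *ᵥ y) = A.map φ *ᵥ entrywise φ κ y :=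
  funext fun i => φ.map_mulVec A y i

lemma map_mulVec_entrywise_eq_zero (φ : R →+* S) {A : Matrix ι κ R} {y : κ → R}
    (hy : A *ᵥ y = 0) : A.map φ *ᵥ entrywise φ κ y = 0 := by
  rw [← entrywise_mulVec, hy, map_zero]

lemma map_mulVec_entrywise_eq_smul (φ : R →+* S) {V : Matrix κ κ R} {δ : R} {y : κ → R}
    (hy : V *ᵥ y = δ • y) : V.map φ *ᵥ entrywise φ κ y = φ δ • entrywise φ κ y := by
  rw [← entrywise_mulVec, hy, LinearMap.map_smulₛₗ]

lemma map_mul_map_eq_zero {κ' : Type*} (φ : R →+* S) {A : Matrix ι κ R} {V : Matrix κ κ' R}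
    (hAV : A * V = 0) : A.map φ * V.map φ = 0 := by
  rw [← Matrix.map_mul, hAV, Matrix.map_zero _ (map_zero φ)]

end Entrywise

section Coordinates

variable {S T ι κ E E' : Type*} [CommRing S] [CommRing T] [Algebra S T] [Fintype E]

/-- The vector over `T` whose `j`-th entry is the linear combination of the family `v` with the
coefficients `z (j, ·)`. -/
noncomputable def combine (κ : Type*) (v : E → T) : (κ × E → S) →ₗ[S] (κ → T) :=
  LinearMap.pi fun j => Fintype.linearCombination S v ∘ₗ LinearMap.funLeft S S fun e => (j, e)

lemma combine_apply (v : E → T) (z : κ × E → S) (j : κ) :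
    combine κ v z j = ∑ e, z (j, e) • v e :=
  rfl

variable [Fintype κ]

/-- The matrix over `S` of multiplication by `A`, with the source restricted to combinations of the
family `v` and the target seen through the functionals `ℓ`. -/
def coordMatrix (A : Matrix ι κ T) (v : E → T) (ℓ : E' → T →ₗ[S] S) :
    Matrix (ι × E') (κ × E) S :=
  .of fun x y => ℓ x.2 (A x.1 y.1 * v y.2)

lemma mulVec_combine_apply (A : Matrix ι κ T) (v : E → T) (z : κ × E → S) (i : ι) :
    (A *ᵥ combine κ v z) i = ∑ x : κ × E, z x • (A i x.1 * v x.2) := by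
  simp_rw [mulVec, dotProduct, combine_apply, Finset.mul_sum, mul_smul_comm,
    Fintype.sum_prod_type]

lemma coordMatrix_mulVec (A : Matrix ι κ T) (v : E → T) (ℓ : E' → T →ₗ[S] S)
    (z : κ × E → S) (x : ι × E') :
    (coordMatrix A v ℓ *ᵥ z) x = ℓ x.2 ((A *ᵥ combine κ v z) x.1) := by
  rw [mulVec_combine_apply]
  simp [coordMatrix, mulVec, dotProduct, mul_comm]

lemma coordMatrix_mulVec_eq_zero_iff {A : Matrix ι κ T} {v : E → T} {ℓ : E' → T →ₗ[S] S}
    {U : Submodule S T} (hU : ∀ i j e, A i j * v e ∈ U)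
    (hℓ : ∀ t ∈ U, (∀ a, ℓ a t = 0) → t = 0) {z : κ × E → S} :
    coordMatrix A v ℓ *ᵥ z = 0 ↔ A *ᵥ combine κ v z = 0 := by
  simp only [funext_iff, coordMatrix_mulVec, Pi.zero_apply]
  refine ⟨fun h i => hℓ _ ?_ fun a => h (i, a), fun h x => by rw [h, map_zero]⟩
  rw [mulVec_combine_apply]
  exact U.sum_mem fun x _ => U.smul_mem _ (hU _ _ _)

end Coordinates

section Syzygies

variable {σ τ R S : Type*} [CommRing R] [CommRing S]

/-- The submodule generated by the syzygies of `A` with entries of total degree at most `B`. -/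
noncomputable def syzygySpan {ι κ : Type*} [Fintype κ] (A : Matrix ι κ (MvPolynomial σ R))
    (B : ℕ) : Submodule (MvPolynomial σ R) (κ → MvPolynomial σ R) :=
  Submodule.span _ {z | A *ᵥ z = 0 ∧ ∀ j, (z j).totalDegree ≤ B}

/-- Every homogeneous linear system over `R[xⱼ : j ∈ σ]` with at most `P` equations and coefficients
of total degree at most `d`, in any number of unknowns, has its solutions generated by those of
total degree at most `B`. Equations and unknowns are indexed by finite types in `Type`. -/
def SyzygyBound (σ R : Type*) [CommRing R] (P d B : ℕ) : Prop :=
  ∀ ⦃ι κ : Type⦄ [Fintype ι] [Fintype κ] (A : Matrix ι κ (MvPolynomial σ R)),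
    Fintype.card ι ≤ P → (∀ i j, (A i j).totalDegree ≤ d) →
      ∀ y, A *ᵥ y = 0 → y ∈ syzygySpan A B

section

variable {ι κ : Type*} [Fintype κ] {A : Matrix ι κ (MvPolynomial σ R)} {B : ℕ}
  {y : κ → MvPolynomial σ R}

lemma entrywise_mem_syzygySpan {φ : MvPolynomial σ R →+* MvPolynomial τ S}
    (hφ : ∀ p, (φ p).totalDegree ≤ p.totalDegree) (hy : y ∈ syzygySpan A B) :
    entrywise φ κ y ∈ syzygySpan (A.map φ) B := by
  have hle : syzygySpan A B ≤ (syzygySpan (A.map φ) B).comap (entrywise φ κ) :=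
    Submodule.span_le.mpr fun z hz => Submodule.subset_span
      ⟨map_mulVec_entrywise_eq_zero φ hz.1, fun j => (hφ _).trans (hz.2 j)⟩
  exact hle hy

lemma mem_syzygySpan_of_entrywise_mem (e : MvPolynomial σ R ≃+* MvPolynomial τ S)
    (he : ∀ p, (e.symm p).totalDegree ≤ p.totalDegree)
    (hy : entrywise (e : MvPolynomial σ R →+* MvPolynomial τ S) κ y ∈
      syzygySpan (A.map (e : MvPolynomial σ R →+* MvPolynomial τ S)) B) :
    y ∈ syzygySpan A B := by
  have h := entrywise_mem_syzygySpan (φ := (e.symm : MvPolynomial τ S →+* MvPolynomial σ R)) he hy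
  have hA : (A.map e).map e.symm = A := by ext1; simp
  have hy' : e.symm ∘ (e ∘ y) = y := by ext1; simp
  rw [← hA, ← hy']
  exact h

end

lemma SyzygyBound.of_equiv {P d B : ℕ} (e : σ ≃ τ) (h : SyzygyBound σ R P d B) :
    SyzygyBound τ R P d B := by
  intro ι κ _ _ A hP hA y hy
  let φ := (renameEquiv R e.symm).toRingEquiv
  refine mem_syzygySpan_of_entrywise_mem φ (fun p => totalDegree_rename_le _ p) ?_
  exact h _ hP (fun i j => (totalDegree_rename_le _ _).trans (hA i j)) _
    (map_mulVec_entrywise_eq_zero _ hy)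

lemma totalDegree_le_of_optionEquivLeft {p : MvPolynomial (Option σ) R} {B E : ℕ}
    (hB : ∀ b, ((optionEquivLeft R σ p).coeff b).totalDegree ≤ B)
    (hE : (optionEquivLeft R σ p).natDegree ≤ E) : p.totalDegree ≤ B + E := by
  refine Finset.sup_le fun m hm => ?_
  have hsome : m.some ∈ ((optionEquivLeft R σ p).coeff (m none)).support := by
    rwa [mem_support_iff, optionEquivLeft_coeff_some_coeff_none, ← mem_support_iff]
  calc m.sum (fun _ e => e) = m none + m.some.sum (fun _ e => e) :=
        Finsupp.sum_option_index _ _ (fun _ => rfl) fun _ _ _ => rfl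
    _ ≤ E + B := add_le_add
        ((Polynomial.le_natDegree_of_mem_supp _ (Polynomial.mem_support_iff.mpr
          (support_nonempty.mp ⟨_, hsome⟩))).trans hE)
        ((le_totalDegree hsome).trans (hB _))
    _ = B + E := add_comm E B

section PolynomialCoordinates

variable {ι κ : Type*} {E d : ℕ}

lemma combine_X_pow_coeff {y : κ → Polynomial S} (hy : ∀ j, (y j).degree < E) :
    combine κ (fun b : Fin E => (Polynomial.X ^ (b : ℕ) : Polynomial S))
      (fun x => (y x.1).coeff x.2) = y := by
  funext j
  simp only [combine_apply, Polynomial.smul_X_eq_monomial]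
  rw [Fin.sum_univ_eq_sum_range (fun b => Polynomial.monomial b ((y j).coeff b)) E]
  by_cases h0 : y j = 0
  · simp [h0]
  · exact ((y j).as_sum_range' E ((Polynomial.natDegree_lt_iff_degree_lt h0).mpr (hy j))).symm

lemma coordMatrix_X_pow_mulVec_eq_zero_iff [Fintype κ] {A : Matrix ι κ (Polynomial S)}
    (hA : ∀ i j, (A i j).natDegree ≤ d) {z : κ × Fin E → S} :
    coordMatrix A (fun b : Fin E => Polynomial.X ^ (b : ℕ))
        (fun a : Fin (E + d) => Polynomial.lcoeff S a) *ᵥ z = 0 ↔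
      A *ᵥ combine κ (fun b : Fin E => (Polynomial.X ^ (b : ℕ) : Polynomial S)) z = 0 := by
  refine coordMatrix_mulVec_eq_zero_iff (U := Polynomial.degreeLT S (E + d))
    (fun i j b => ?_) fun p hp h => Polynomial.ext fun a => ?_
  · rw [Polynomial.mem_degreeLT]
    by_cases h0 : A i j = 0
    · simp [h0]
    · refine Polynomial.degree_le_natDegree.trans_lt ?_
      have := Polynomial.natDegree_mul_le (p := A i j) (q := Polynomial.X ^ (b : ℕ))
      have := Polynomial.natDegree_X_pow_le (R := S) b
      have := hA i j
      exact_mod_cast (by omega)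
  · by_cases ha : a < E + d
    · exact h ⟨a, ha⟩
    · refine Polynomial.coeff_eq_zero_of_degree_lt ((Polynomial.mem_degreeLT.mp hp).trans_le ?_)
      exact_mod_cast not_lt.mp ha

end PolynomialCoordinates

lemma totalDegree_optionEquivLeft_symm_combine_le {κ : Type*} {B E : ℕ}
    {z : κ × Fin E → MvPolynomial σ R} (hz : ∀ x, (z x).totalDegree ≤ B) (j : κ) :
    ((optionEquivLeft R σ).symm
      (combine κ (fun b : Fin E => Polynomial.X ^ (b : ℕ)) z j)).totalDegree ≤ B + E := by
  refine totalDegree_le_of_optionEquivLeft (fun n => ?_) ?_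
  · rw [AlgEquiv.apply_symm_apply, combine_apply, Polynomial.finsetSum_coeff]
    refine totalDegree_finsetSum_le fun b _ => ?_
    rw [Polynomial.coeff_smul, Polynomial.coeff_X_pow, smul_ite, smul_zero, smul_eq_mul, mul_one]
    split_ifs
    · exact hz _
    · simp
  · rw [AlgEquiv.apply_symm_apply, combine_apply]
    exact Polynomial.natDegree_sum_le_of_forall_le _ _ fun b _ =>
      (Polynomial.natDegree_smul_le _ _).trans ((Polynomial.natDegree_X_pow_le _).trans b.2.le)

lemma entrywise_combine_mem_syzygySpan {ι κ : Type*} [Fintype κ] {d E B : ℕ}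
    {A : Matrix ι κ (Polynomial (MvPolynomial σ R))} (hA : ∀ i j, (A i j).natDegree ≤ d)
    {z : κ × Fin E → MvPolynomial σ R}
    (hz : z ∈ syzygySpan (coordMatrix A (fun b : Fin E => Polynomial.X ^ (b : ℕ))
      fun a : Fin (E + d) => Polynomial.lcoeff _ a) B) :
    entrywise (optionEquivLeft R σ).symm.toRingHom κ
        (combine κ (fun b : Fin E => Polynomial.X ^ (b : ℕ)) z) ∈
      syzygySpan (A.map (optionEquivLeft R σ).symm.toRingHom) (B + E) := by
  induction hz using Submodule.span_induction with
  | mem w hw =>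
    refine Submodule.subset_span ⟨?_, totalDegree_optionEquivLeft_symm_combine_le hw.2⟩
    exact map_mulVec_entrywise_eq_zero _ ((coordMatrix_X_pow_mulVec_eq_zero_iff hA).mp hw.1)
  | zero =>
    rw [map_zero, map_zero]
    exact Submodule.zero_mem _
  | add w w' _ _ hw hw' =>
    rw [map_add, map_add]
    exact Submodule.add_mem _ hw hw'
  | smul c w _ hw =>
    rw [map_smul, ← algebraMap_smul (Polynomial (MvPolynomial σ R)) c, LinearMap.map_smulₛₗ]
    exact Submodule.smul_mem _ _ hw

lemma mem_syzygySpan_of_degree_lt {P d E B : ℕ} (h : SyzygyBound σ R (P * (E + d)) d B)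
    {ι κ : Type} [Fintype ι] [Fintype κ] (hP : Fintype.card ι ≤ P)
    {A : Matrix ι κ (MvPolynomial (Option σ) R)} (hA : ∀ i j, (A i j).totalDegree ≤ d)
    {y : κ → MvPolynomial (Option σ) R} (hy : A *ᵥ y = 0)
    (hdeg : ∀ j, (optionEquivLeft R σ (y j)).degree < E) :
    y ∈ syzygySpan A (B + E) := by
  set φ := (optionEquivLeft R σ).toRingHom
  have hφA (i j) : (A.map φ i j).natDegree ≤ d :=
    (natDegree_optionEquivLeft_le _).trans (hA i j)
  have hcoeff := combine_X_pow_coeff (y := entrywise φ κ y) hdeg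
  set z : κ × Fin E → MvPolynomial σ R := fun x => (entrywise φ κ y x.1).coeff x.2
  have hz : z ∈ syzygySpan (coordMatrix (A.map φ) (fun b : Fin E => Polynomial.X ^ (b : ℕ))
      fun a : Fin (E + d) => Polynomial.lcoeff _ a) B := by
    refine h _ ?_ (fun x w => ?_) z ?_
    · simpa using Nat.mul_le_mul_right _ hP
    · simp only [coordMatrix, of_apply, Polynomial.lcoeff_apply, Polynomial.coeff_mul_X_pow']
      split_ifs
      · exact (totalDegree_coeff_optionEquivLeft_le _ _ _ _).trans (hA _ _)
      · simp
    · rw [coordMatrix_X_pow_mulVec_eq_zero_iff hφA, hcoeff]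
      exact map_mulVec_entrywise_eq_zero φ hy
  have hA' : (A.map φ).map (optionEquivLeft R σ).symm.toRingHom = A :=
    Matrix.ext fun i j => (optionEquivLeft R σ).symm_apply_apply (A i j)
  have hy' : entrywise (optionEquivLeft R σ).symm.toRingHom κ (entrywise φ κ y) = y :=
    funext fun j => (optionEquivLeft R σ).symm_apply_apply (y j)
  rw [← hA', ← hy', ← hcoeff]
  exact entrywise_combine_mem_syzygySpan hφA hz

end Syzygies

/-! ### Elimination of one variable -/

section Elimination

section Division

variable {S κ : Type*} [CommRing S] [Fintype κ] {δ : Polynomial S} {E : ℕ}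

lemma exists_eq_mul_add_degree_lt [Nontrivial S] (hδ : IsUnit δ.leadingCoeff) (p : Polynomial S) :
    ∃ q r, p = δ * q + r ∧ r.degree < δ.degree := by
  have hmonic := Polynomial.monic_of_isUnit_leadingCoeff_inv_smul hδ
  set u := hδ.unit⁻¹
  refine ⟨u • (p /ₘ (u • δ)), p %ₘ (u • δ), ?_,
    (Polynomial.degree_modByMonic_lt p hmonic).trans_le (Polynomial.degree_smul_le (u : S) δ)⟩
  rw [mul_smul_comm, ← smul_mul_assoc, add_comm]
  exact (Polynomial.modByMonic_add_div p (u • δ)).symm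

lemma degree_lt_of_smul_eq_mulVec [IsDomain S] {V : Matrix κ κ (Polynomial S)}
    (hV : ∀ i j, (V i j).natDegree ≤ E) {r u : κ → Polynomial S}
    (hr : ∀ j, (r j).degree < δ.degree) (h : δ • u = V *ᵥ r) (j : κ) : (u j).degree < E := by
  have hδ : δ ≠ 0 := by
    rintro rfl
    simpa using hr j
  have hmul : δ * u j ∈ Polynomial.degreeLT S (E + δ.natDegree) := by
    rw [show δ * u j = ∑ l, V j l * r l from congrFun h j]
    refine Submodule.sum_mem _ fun l _ => Polynomial.mem_degreeLT.mpr ?_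
    rw [Polynomial.degree_mul, Nat.cast_add, ← Polynomial.degree_eq_natDegree hδ]
    exact (add_le_add_left (Polynomial.natDegree_le_iff_degree_le.mp (hV j l)) _).trans_lt
      (WithBot.add_lt_add_left (WithBot.natCast_ne_bot E) (hr l))
  rw [Polynomial.mem_degreeLT, Polynomial.degree_mul, Nat.cast_add,
    ← Polynomial.degree_eq_natDegree hδ, add_comm] at hmul
  exact lt_of_add_lt_add_right hmul

/- Dividing `y = δ q + r` gives `δ (y - V q) = V r`. -/
lemma exists_degree_sub_mulVec_lt [IsDomain S] {V : Matrix κ κ (Polynomial S)}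
    (hδ : IsUnit δ.leadingCoeff) (hV : ∀ i j, (V i j).natDegree ≤ E) {y : κ → Polynomial S}
    (hy : V *ᵥ y = δ • y) : ∃ q, ∀ j, ((y - V *ᵥ q) j).degree < E := by
  choose q r hqr hr using fun j => exists_eq_mul_add_degree_lt hδ (y j)
  refine ⟨q, degree_lt_of_smul_eq_mulVec hV hr ?_⟩
  have hr_eq : r = y - δ • q := funext fun j => by simp [hqr j]
  rw [hr_eq, mulVec_sub, hy, mulVec_smul, smul_sub]

end Division

lemma mulVec_mem_syzygySpan {τ R ι κ κ' : Type*} [CommRing R] [Fintype κ] [Fintype κ']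
    {A : Matrix ι κ (MvPolynomial τ R)} {V : Matrix κ κ' (MvPolynomial τ R)} {B : ℕ}
    (hAV : A * V = 0) (hV : ∀ i j, (V i j).totalDegree ≤ B) (q : κ' → MvPolynomial τ R) :
    V *ᵥ q ∈ syzygySpan A B := by
  have hcol : V *ᵥ q = ∑ l, q l • V.col l := by
    ext1 j
    simp [mulVec, dotProduct, mul_comm]
  rw [hcol]
  refine Submodule.sum_mem _ fun l _ => Submodule.smul_mem _ _ (Submodule.subset_span ?_)
  have hker : A *ᵥ V.col l = (A * V).col l := rfl
  exact ⟨by rw [hker, hAV]; rfl, fun j => hV j l⟩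

variable {σ K : Type*} [Field K] {ι κ : Type} [Fintype ι] [Fintype κ]
  {A : Matrix ι κ (MvPolynomial (Option σ) K)} {V : Matrix κ κ (MvPolynomial (Option σ) K)}
  {P d E B : ℕ} {δ : MvPolynomial (Option σ) K} {y : κ → MvPolynomial (Option σ) K}

lemma mem_syzygySpan_of_isUnit_leadingCoeff (h : SyzygyBound σ K (P * (E + d)) d B)
    (hP : Fintype.card ι ≤ P) (hA : ∀ i j, (A i j).totalDegree ≤ d)
    (hδ : IsUnit (optionEquivLeft K σ δ).leadingCoeff) (hAV : A * V = 0)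
    (hV : ∀ i j, (V i j).totalDegree ≤ E) (hy : A *ᵥ y = 0) (hVy : V *ᵥ y = δ • y) :
    y ∈ syzygySpan A (B + E) := by
  set φ := (optionEquivLeft K σ).toRingHom
  have hφδ : IsUnit (φ δ).leadingCoeff := hδ
  have hφV (i j) : (V.map φ i j).natDegree ≤ E := (natDegree_optionEquivLeft_le _).trans (hV i j)
  obtain ⟨q, hq⟩ := exists_degree_sub_mulVec_lt hφδ hφV (map_mulVec_entrywise_eq_smul φ hVy)
  obtain ⟨p, rfl⟩ : ∃ p, entrywise φ κ p = q :=
    (optionEquivLeft K σ).surjective.comp_left q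
  rw [← entrywise_mulVec, ← map_sub] at hq
  rw [← sub_add_cancel y (V *ᵥ p)]
  refine Submodule.add_mem _ (mem_syzygySpan_of_degree_lt h hP hA ?_ hq)
    (mulVec_mem_syzygySpan hAV (fun i j => (hV i j).trans (Nat.le_add_left _ _)) p)
  rw [mulVec_sub, hy, mulVec_mulVec, hAV, zero_mulVec, sub_zero]

lemma mem_syzygySpan_of_mulVec_eq_smul [Finite σ] [Infinite K]
    (h : SyzygyBound σ K (P * (E + d)) d B)
    (hP : Fintype.card ι ≤ P) (hA : ∀ i j, (A i j).totalDegree ≤ d)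
    (hδ : δ ≠ 0) (hAV : A * V = 0)
    (hV : ∀ i j, (V i j).totalDegree ≤ E) (hy : A *ᵥ y = 0) (hVy : V *ᵥ y = δ • y) :
    y ∈ syzygySpan A (B + E) := by
  classical
  have := Fintype.ofFinite σ
  obtain ⟨M, hM⟩ := exists_linearSubst_isUnit_leadingCoeff hδ
  refine mem_syzygySpan_of_entrywise_mem (linearSubst M).toRingEquiv
    (totalDegree_linearSubst_symm_le M) ?_
  set φ := (linearSubst M).toRingHom
  refine mem_syzygySpan_of_isUnit_leadingCoeff (V := V.map φ) h hP
    (fun i j => (totalDegree_linearSubst_le M _).trans (hA i j)) hM (map_mul_map_eq_zero φ hAV)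
    (fun i j => (totalDegree_linearSubst_le M _).trans (hV i j))
    (map_mulVec_entrywise_eq_zero φ hy) (map_mulVec_entrywise_eq_smul φ hVy)

lemma SyzygyBound.option [Finite σ] [Infinite K] (h : SyzygyBound σ K (P * (P * d + d)) d B) :
    SyzygyBound (Option σ) K P d (B + P * d) := by
  classical
  intro ι κ _ _ A hP hA y hy
  obtain ⟨δ, hδ_mem, hδ, W, hW, hWA⟩ :=
    exists_generalized_inverse (monotone_restrictTotalDegree (Option σ) K) (d := d) A fun i j => by
      simpa [mem_restrictTotalDegree] using hA i j
  have hle := monotone_restrictTotalDegree (Option σ) K (Nat.mul_le_mul_right d hP)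
  refine mem_syzygySpan_of_mulVec_eq_smul (V := δ • 1 - W * A) h hP hA hδ ?_ (fun i j => ?_) hy ?_
  · rw [Matrix.mul_sub, ← Matrix.mul_assoc, hW, Matrix.mul_smul, Matrix.mul_one, sub_self]
  · rw [← mem_restrictTotalDegree]
    refine Submodule.sub_mem _ (hle ?_) (hle (hWA i j))
    rw [Matrix.smul_apply, one_apply]
    split_ifs <;> simp [hδ_mem]
  · rw [sub_mulVec, ← mulVec_mulVec, hy, mulVec_zero, sub_zero, smul_mulVec, one_mulVec]

end Elimination

/-! ### Hermann's bound over a field -/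

section Hermann

lemma syzygyBound_of_isEmpty {σ R : Type*} [IsEmpty σ] [CommRing R] (P d B : ℕ) :
    SyzygyBound σ R P d B := by
  intro ι κ _ _ A _ _ y hy
  refine Submodule.subset_span ⟨hy, fun j => ?_⟩
  rw [eq_C_of_isEmpty (y j), totalDegree_C]
  exact Nat.zero_le B

/- One elimination step replaces `P` by `P (P d + d)`, hence `2 P d` by at most its square, and
increases the bound by `P d`. -/
lemma elimination_step_bound {P d B N : ℕ} (h : (2 * P * d) ^ 2 ^ (N + 1) ≤ B + P * d) :
    P * d ≤ B ∧
      (2 * (P * (P * d + d)) * d) ^ 2 ^ N ≤ B - P * d + P * (P * d + d) * d := by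
  have hself : 2 * P * d ≤ (2 * P * d) ^ 2 ^ (N + 1) := Nat.le_self_pow (by positivity) _
  have hsq : 2 * (P * (P * d + d)) * d ≤ (2 * P * d) ^ 2 := by
    rcases P.eq_zero_or_pos with rfl | hP
    · simp
    · nlinarith [Nat.mul_le_mul_right (P * d ^ 2) hP]
  have habsorb : 2 * (P * d) ≤ P * (P * d + d) * d := by
    rcases (P * d).eq_zero_or_pos with h0 | hPd
    · simp [h0]
    · have hd : 1 ≤ d := Nat.pos_of_mul_pos_left hPd
      nlinarith
  have hpow : (2 * (P * (P * d + d)) * d) ^ 2 ^ N ≤ (2 * P * d) ^ 2 ^ (N + 1) :=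
    (Nat.pow_le_pow_left hsq _).trans_eq (by rw [← pow_mul, ← pow_succ'])
  rw [mul_assoc 2 P d] at hself hpow h
  omega

/- The term `P * d` on the right of the hypothesis absorbs the increments `P * d` of
`SyzygyBound.option`. -/
theorem syzygyBound_of_infinite (K σ : Type*) [Field K] [Infinite K] [Finite σ] {P d B : ℕ}
    (h : (2 * P * d) ^ 2 ^ Nat.card σ ≤ B + P * d) : SyzygyBound σ K P d B := by
  induction σ using Finite.induction_empty_option generalizing P B with
  | of_equiv e ih => exact (ih (by rwa [Nat.card_congr e])).of_equiv e
  | h_empty => exact syzygyBound_of_isEmpty P d B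
  | h_option ih =>
    rw [Finite.card_option] at h
    obtain ⟨hle, hstep⟩ := elimination_step_bound h
    rw [← Nat.sub_add_cancel hle]
    exact (ih hstep).option

end Hermann

section Descent

variable {R S σ : Type*} [CommRing R] [CommRing S] [Algebra R S]

attribute [local instance] MvPolynomial.algebraMvPolynomial

/-- A linear functional `π : S → R` applied to all coefficients, as an `R[xⱼ : j ∈ σ]`-linear map.
It brings syzygies over an extension `S` of `R` back to `R`. -/
noncomputable def mapCoeffs (σ : Type*) (π : S →ₗ[R] R) :
    MvPolynomial σ S →ₗ[MvPolynomial σ R] MvPolynomial σ R where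
  toFun := AddMonoidAlgebra.map π.toAddMonoidHom
  map_add' := AddMonoidAlgebra.map_add _
  map_smul' c p := by
    classical
    ext m
    rw [Algebra.smul_def, algebraMap_def, coeff_addMonoidAlgebraMap, coeff_mul, map_sum,
      RingHom.id_apply, smul_eq_mul, coeff_mul]
    refine Finset.sum_congr rfl fun x _ => ?_
    rw [coeff_map, ← Algebra.smul_def, coeff_addMonoidAlgebraMap]
    exact π.map_smul _ _

lemma coeff_mapCoeffs (π : S →ₗ[R] R) (p : MvPolynomial σ S) (m : σ →₀ ℕ) :
    coeff m (mapCoeffs σ π p) = π (coeff m p) :=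
  coeff_addMonoidAlgebraMap _ _ _

lemma totalDegree_mapCoeffs_le (π : S →ₗ[R] R) (p : MvPolynomial σ S) :
    (mapCoeffs σ π p).totalDegree ≤ p.totalDegree :=
  Finset.sup_mono fun m hm => by
    rw [mem_support_iff, coeff_mapCoeffs] at hm
    exact mem_support_iff.mpr fun h => hm (by rw [h, map_zero])

lemma mapCoeffs_map_algebraMap {π : S →ₗ[R] R} (hπ : π 1 = 1) (p : MvPolynomial σ R) :
    mapCoeffs σ π (map (algebraMap R S) p) = p := by
  ext m
  rw [coeff_mapCoeffs, coeff_map, Algebra.algebraMap_eq_smul_one, map_smul, hπ, smul_eq_mul,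
    mul_one]

lemma mapCoeffs_mulVec {ι κ : Type*} [Fintype κ] (π : S →ₗ[R] R)
    (A : Matrix ι κ (MvPolynomial σ R)) (w : κ → MvPolynomial σ S) :
    mapCoeffs σ π ∘ (A.map (map (algebraMap R S)) *ᵥ w) = A *ᵥ (mapCoeffs σ π ∘ w) := by
  ext1 i
  simp only [Function.comp_apply, mulVec, dotProduct, map_sum, Matrix.map_apply]
  exact Finset.sum_congr rfl fun j _ => (mapCoeffs σ π).map_smul (A i j) (w j)

lemma span_range_C_eq_top :
    Submodule.span (MvPolynomial σ R) (Set.range (C : S → MvPolynomial σ S)) = ⊤ := by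
  refine eq_top_iff.mpr fun p _ => ?_
  induction p using MvPolynomial.induction_on' with
  | monomial m s =>
    have hmonomial :
        monomial m s = (monomial m 1 : MvPolynomial σ R) • (C s : MvPolynomial σ S) := by
      rw [Algebra.smul_def, algebraMap_def, map_monomial, map_one, mul_comm, C_mul_monomial,
        mul_one]
    rw [hmonomial]
    exact Submodule.smul_mem _ _ (Submodule.subset_span ⟨s, rfl⟩)
  | add p q hp hq => exact Submodule.add_mem _ (hp trivial) (hq trivial)

/- `mapCoeffs` is only `R[xⱼ]`-linear, so the span over `S[xⱼ]` of the generators is first written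
as the span over `R[xⱼ]` of their multiples by constants of `S`. -/
lemma mapCoeffs_comp_mem_syzygySpan {ι κ : Type*} [Fintype κ] (π : S →ₗ[R] R)
    {A : Matrix ι κ (MvPolynomial σ R)} {B : ℕ} {w : κ → MvPolynomial σ S}
    (hw : w ∈ syzygySpan (A.map (map (algebraMap R S))) B) :
    mapCoeffs σ π ∘ w ∈ syzygySpan A B := by
  rw [syzygySpan, ← Submodule.restrictScalars_mem (MvPolynomial σ R),
    ← Submodule.span_smul_of_span_eq_top (span_range_C_eq_top (R := R))] at hw
  refine Submodule.span_le (p := (syzygySpan A B).comap ((mapCoeffs σ π).compLeft κ)) |>.mpr ?_ hw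
  rintro _ ⟨_, ⟨s, rfl⟩, v, ⟨hker, hdeg⟩, rfl⟩
  refine Submodule.subset_span ⟨?_, fun j => (totalDegree_mapCoeffs_le π _).trans ?_⟩
  · refine (mapCoeffs_mulVec π A _).symm.trans ?_
    rw [mulVec_smul, hker, smul_zero]
    exact map_zero ((mapCoeffs σ π).compLeft ι)
  · calc (C s * v j).totalDegree ≤ (C s).totalDegree + (v j).totalDegree := totalDegree_mul _ _
      _ ≤ B := by simpa using hdeg j

lemma SyzygyBound.of_retraction {π : S →ₗ[R] R} (hπ : π 1 = 1) {P d B : ℕ}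
    (h : SyzygyBound σ S P d B) : SyzygyBound σ R P d B := by
  intro ι κ _ _ A hP hA y hy
  set φ : MvPolynomial σ R →+* MvPolynomial σ S := map (algebraMap R S)
  have hmem := mapCoeffs_comp_mem_syzygySpan π <|
    h (A.map φ) hP (fun i j => (Finset.sup_mono (support_map_subset _ _)).trans (hA i j)) _
      (map_mulVec_entrywise_eq_zero φ hy)
  have hy' : mapCoeffs σ π ∘ entrywise φ κ y = y :=
    funext fun j => mapCoeffs_map_algebraMap hπ (y j)
  rwa [hy'] at hmem

theorem syzygyBound_of_field (K σ : Type*) [Field K] [Finite σ] (P d : ℕ) :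
    SyzygyBound σ K P d ((2 * P * d) ^ 2 ^ Nat.card σ) := by
  obtain ⟨π, hπ⟩ := (Algebra.linearMap K (AlgebraicClosure K)).exists_leftInverse_of_injective
    (LinearMap.ker_eq_bot.mpr (algebraMap K (AlgebraicClosure K)).injective)
  have hπ_one : π 1 = 1 := by simpa using LinearMap.congr_fun hπ 1
  exact (syzygyBound_of_infinite (AlgebraicClosure K) σ (Nat.le_add_right _ _)).of_retraction hπ_one

end Descent

/-! ### Lifting syzygies along a surjection onto a field -/

section BoxCoordinates

variable {σ R S ι κ : Type*} [CommRing R] [CommRing S] {B d : ℕ}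

/-- The exponent vectors with all exponents at most `B`, indexed by functions `σ → Fin (B + 1)`. -/
noncomputable def boxExponent [Finite σ] (e : σ → Fin (B + 1)) : σ →₀ ℕ :=
  Finsupp.equivFunOnFinite.symm fun s => e s

lemma boxExponent_injective [Finite σ] :
    Function.Injective (boxExponent : (σ → Fin (B + 1)) → σ →₀ ℕ) := fun _ _ h =>
  funext fun s => Fin.ext (DFunLike.congr_fun h s)

lemma exists_boxExponent_eq [Finite σ] {m : σ →₀ ℕ} (hm : ∀ s, m s ≤ B) :
    ∃ e : σ → Fin (B + 1), boxExponent e = m :=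
  ⟨fun s => ⟨m s, Nat.lt_succ_of_le (hm s)⟩, Finsupp.ext fun _ => rfl⟩

/-- The monomials of degree at most `B` in each variable. -/
noncomputable def boxMonomial (σ R : Type*) [Finite σ] [CommRing R] (B : ℕ)
    (e : σ → Fin (B + 1)) : MvPolynomial σ R :=
  monomial (boxExponent e) 1

/-- The coefficients of the monomials `boxMonomial σ R B`, as linear functionals. -/
noncomputable def boxCoeff (σ R : Type*) [Finite σ] [CommRing R] (B : ℕ)
    (e : σ → Fin (B + 1)) : MvPolynomial σ R →ₗ[R] R :=
  lcoeff R (boxExponent e)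

lemma mem_restrictDegree_of_totalDegree_le {p : MvPolynomial σ R} (hp : p.totalDegree ≤ B) :
    p ∈ restrictDegree σ R B :=
  restrictTotalDegree_le_restrictDegree _ _ _ ((mem_restrictTotalDegree _ _ _).mpr hp)

lemma mul_mem_restrictDegree {p q : MvPolynomial σ R} (hp : p ∈ restrictDegree σ R B)
    (hq : q ∈ restrictDegree σ R d) : p * q ∈ restrictDegree σ R (B + d) := by
  classical
  rw [mem_restrictDegree] at *
  intro m hm s
  obtain ⟨a, ha, b, hb, rfl⟩ := Finset.mem_add.mp (support_mul p q hm)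
  exact add_le_add (hp a ha s) (hq b hb s)

lemma map_mem_restrictDegree (φ : R →+* S) {p : MvPolynomial σ R}
    (hp : p ∈ restrictDegree σ R B) : map φ p ∈ restrictDegree σ S B := by
  rw [mem_restrictDegree] at *
  exact fun m hm => hp m (support_map_subset φ p hm)

lemma boxMonomial_mem_restrictDegree [Finite σ] (e : σ → Fin (B + 1)) :
    boxMonomial σ R B e ∈ restrictDegree σ R B := by
  rw [mem_restrictDegree]
  intro m hm s
  rw [Finset.mem_singleton.mp (support_monomial_subset hm)]
  exact Nat.le_of_lt_succ (e s).2

lemma eq_zero_of_boxCoeff_eq_zero [Finite σ] {p : MvPolynomial σ R}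
    (hp : p ∈ restrictDegree σ R B) (h : ∀ e, boxCoeff σ R B e p = 0) : p = 0 := by
  by_contra hne
  obtain ⟨m, hm⟩ := support_nonempty.mpr hne
  obtain ⟨e, rfl⟩ := exists_boxExponent_eq ((mem_restrictDegree _ _ _).mp hp m hm)
  exact mem_support_iff.mp hm (h e)

lemma coordMatrix_box_map [Finite σ] (φ : R →+* S) (A : Matrix ι κ (MvPolynomial σ R)) (D : ℕ) :
    coordMatrix (A.map (map φ)) (boxMonomial σ S B) (boxCoeff σ S D) =
      (coordMatrix A (boxMonomial σ R B) (boxCoeff σ R D)).map φ := by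
  ext x y
  simp [coordMatrix, boxCoeff, boxMonomial, ← coeff_map]

lemma coordMatrix_box_mem [Finite σ] {k : Type*} [CommRing k] [Module k R] {G : Submodule k R}
    {A : Matrix ι κ (MvPolynomial σ R)} (hA : ∀ i j m, (A i j).coeff m ∈ G) (D : ℕ) (x y) :
    coordMatrix A (boxMonomial σ R B) (boxCoeff σ R D) x y ∈ G := by
  simp only [coordMatrix, of_apply, boxCoeff, boxMonomial, lcoeff_apply, coeff_mul_monomial',
    mul_one]
  split_ifs
  · exact hA _ _ _
  · exact G.zero_mem

variable [Fintype σ] [DecidableEq σ]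

lemma boxCoeff_combine_boxMonomial (z : κ × (σ → Fin (B + 1)) → R) (j : κ)
    (e : σ → Fin (B + 1)) :
    boxCoeff σ R B e (combine κ (boxMonomial σ R B) z j) = z (j, e) := by
  classical
  simp [boxCoeff, boxMonomial, combine_apply, coeff_monomial, boxExponent_injective.eq_iff]

lemma combine_boxMonomial_mem_restrictDegree (z : κ × (σ → Fin (B + 1)) → R) (j : κ) :
    combine κ (boxMonomial σ R B) z j ∈ restrictDegree σ R B :=
  Submodule.sum_mem _ fun e _ => Submodule.smul_mem _ _ (boxMonomial_mem_restrictDegree e)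

lemma combine_boxMonomial_boxCoeff {w : κ → MvPolynomial σ R}
    (hw : ∀ j, w j ∈ restrictDegree σ R B) :
    combine κ (boxMonomial σ R B) (fun x => boxCoeff σ R B x.2 (w x.1)) = w := by
  funext j
  rw [← sub_eq_zero]
  refine eq_zero_of_boxCoeff_eq_zero
    (Submodule.sub_mem _ (combine_boxMonomial_mem_restrictDegree _ j) (hw j)) fun e => ?_
  rw [map_sub, boxCoeff_combine_boxMonomial, sub_self]

lemma entrywise_combine_boxMonomial (φ : R →+* S) (z : κ × (σ → Fin (B + 1)) → R) :
    entrywise (map φ) κ (combine κ (boxMonomial σ R B) z) =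
      combine κ (boxMonomial σ S B) (entrywise φ _ z) := by
  funext j
  simp [entrywise, combine_apply, boxMonomial, smul_eq_C_mul]

lemma coordMatrix_box_mulVec_eq_zero_iff [Fintype κ] {A : Matrix ι κ (MvPolynomial σ R)}
    (hA : ∀ i j, A i j ∈ restrictDegree σ R d)
    {z : κ × (σ → Fin (B + 1)) → R} :
    coordMatrix A (boxMonomial σ R B) (boxCoeff σ R (d + B)) *ᵥ z = 0 ↔
      A *ᵥ combine κ (boxMonomial σ R B) z = 0 :=
  coordMatrix_mulVec_eq_zero_iff
    (fun i j e => mul_mem_restrictDegree (hA i j) (boxMonomial_mem_restrictDegree e))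
    fun _ => eq_zero_of_boxCoeff_eq_zero

end BoxCoordinates

section Lifting

variable {k R K : Type*} [CommRing k] [CommRing R] [IsDomain R] [Module k R] [Field K]
  {F : ℕ → Submodule k R} [SetLike.GradedMonoid F] {φ : R →+* K}

lemma exists_lift_mulVec_eq_zero (hF : Monotone F) (hφ : Function.Surjective φ)
    {ρ γ : Type*} [Fintype ρ] [Fintype γ] {e : ℕ} {M : Matrix ρ γ R} (hM : ∀ i j, M i j ∈ F e)
    (hker : ∀ δ ∈ F (Fintype.card ρ * e), φ δ = 0 → δ = 0)
    {w : γ → K} (hw : M.map φ *ᵥ w = 0) :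
    ∃ w', M *ᵥ w' = 0 ∧ entrywise φ γ w' = w := by
  obtain ⟨δ, hδF, hδ, W, hMWM, -⟩ := exists_generalized_inverse hF M hM
  have hφδ : φ δ ≠ 0 := mt (hker δ hδF) hδ
  obtain ⟨u, hu⟩ := hφ (φ δ)⁻¹
  obtain ⟨v, rfl⟩ : ∃ v, entrywise φ γ v = w := hφ.comp_left w
  refine ⟨u • (δ • v - W *ᵥ (M *ᵥ v)), ?_, ?_⟩
  · rw [mulVec_smul, mulVec_sub, mulVec_smul, mulVec_mulVec, mulVec_mulVec, hMWM, smul_mulVec,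
      sub_self, smul_zero]
  · rw [LinearMap.map_smulₛₗ, map_sub, LinearMap.map_smulₛₗ, entrywise_mulVec, entrywise_mulVec,
      hw, mulVec_zero, sub_zero, smul_smul, hu, inv_mul_cancel₀ hφδ, one_smul]

variable {σ : Type*} [Fintype σ] {B d e : ℕ}

lemma exists_lift_of_mem_restrictDegree (hF : Monotone F) (hφ : Function.Surjective φ)
    {ι κ : Type*} [Fintype ι] [Fintype κ] {A : Matrix ι κ (MvPolynomial σ R)}
    (hA : ∀ i j, A i j ∈ restrictDegree σ R d) (hcoeff : ∀ i j m, (A i j).coeff m ∈ F e)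
    (hker : ∀ δ ∈ F (Fintype.card ι * (d + B + 1) ^ Fintype.card σ * e), φ δ = 0 → δ = 0)
    {w : κ → MvPolynomial σ K} (hw : A.map (map φ) *ᵥ w = 0)
    (hwB : ∀ j, w j ∈ restrictDegree σ K B) :
    ∃ w', A *ᵥ w' = 0 ∧ entrywise (map φ) κ w' = w := by
  classical
  set z : κ × (σ → Fin (B + 1)) → K := fun x => boxCoeff σ K B x.2 (w x.1)
  have hzw : combine κ (boxMonomial σ K B) z = w := combine_boxMonomial_boxCoeff hwB
  have hz : (coordMatrix A (boxMonomial σ R B) (boxCoeff σ R (d + B))).map φ *ᵥ z = 0 := by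
    rw [← coordMatrix_box_map, coordMatrix_box_mulVec_eq_zero_iff, hzw, hw]
    exact fun i j => map_mem_restrictDegree φ (hA i j)
  obtain ⟨z', hz', hzz'⟩ := exists_lift_mulVec_eq_zero hF hφ
    (coordMatrix_box_mem hcoeff (d + B)) (by simpa using hker) hz
  refine ⟨_, (coordMatrix_box_mulVec_eq_zero_iff hA).mp hz', ?_⟩
  rw [entrywise_combine_boxMonomial, hzz', hzw]

lemma exists_lift_of_mem_syzygySpan (hF : Monotone F) (hφ : Function.Surjective φ)
    {ι κ : Type*} [Fintype ι] [Fintype κ] {A : Matrix ι κ (MvPolynomial σ R)}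
    (hA : ∀ i j, A i j ∈ restrictDegree σ R d) (hcoeff : ∀ i j m, (A i j).coeff m ∈ F e)
    (hker : ∀ δ ∈ F (Fintype.card ι * (d + B + 1) ^ Fintype.card σ * e), φ δ = 0 → δ = 0)
    {w : κ → MvPolynomial σ K} (hw : w ∈ syzygySpan (A.map (map φ)) B) :
    ∃ w', A *ᵥ w' = 0 ∧ entrywise (map φ) κ w' = w := by
  have : RingHomSurjective (map φ : MvPolynomial σ R →+* MvPolynomial σ K) :=
    ⟨map_surjective φ hφ⟩
  have hle : syzygySpan (A.map (map φ)) B ≤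
      (LinearMap.ker A.mulVecLin).map (entrywise (map φ) κ) :=
    Submodule.span_le.mpr fun z hz =>
      exists_lift_of_mem_restrictDegree hF hφ hA hcoeff hker hz.1 fun j =>
        mem_restrictDegree_of_totalDegree_le (hz.2 j)
  exact hle hw

/- A lift `a'` of the syzygy `a mod f` satisfies `a = a' + f b`, whence `f g = A a = f (A b)`. -/
lemma exists_eq_mulVec_of_C_smul_eq_mulVec (hF : Monotone F) (hφ : Function.Surjective φ)
    {f : R} (hf : f ≠ 0) (hφf : ∀ r, φ r = 0 ↔ f ∣ r) {ι κ : Type} [Fintype ι] [Fintype κ]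
    (hB : SyzygyBound σ K (Fintype.card ι) d B) {A : Matrix ι κ (MvPolynomial σ R)}
    (hA : ∀ i j, (A i j).totalDegree ≤ d) (hcoeff : ∀ i j m, (A i j).coeff m ∈ F e)
    (hker : ∀ δ ∈ F (Fintype.card ι * (d + B + 1) ^ Fintype.card σ * e), φ δ = 0 → δ = 0)
    {g : ι → MvPolynomial σ R} {a : κ → MvPolynomial σ R}
    (hg : (C f : MvPolynomial σ R) • g = A *ᵥ a) :
    ∃ b, g = A *ᵥ b := by
  have hsyz : A.map (map φ) *ᵥ entrywise (map φ) κ a = 0 := by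
    rw [← entrywise_mulVec, ← hg, LinearMap.map_smulₛₗ, map_C, (hφf f).mpr dvd_rfl, C_0, zero_smul]
  obtain ⟨a', ha', haa'⟩ := exists_lift_of_mem_syzygySpan hF hφ
    (fun i j => mem_restrictDegree_of_totalDegree_le (hA i j)) hcoeff hker
    (hB (A.map (map φ)) le_rfl
      (fun i j => (Finset.sup_mono (support_map_subset _ _)).trans (hA i j)) _ hsyz)
  have hdvd (j) : C f ∣ (a - a') j := by
    rw [C_dvd_iff_map_hom_eq_zero φ f hφf, Pi.sub_apply, map_sub, sub_eq_zero]
    exact (congrFun haa' j).symm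
  choose b hb using hdvd
  have hab : a - a' = (C f : MvPolynomial σ R) • b := funext hb
  refine ⟨b, smul_right_injective _ (C_ne_zero.mpr hf : (C f : MvPolynomial σ R) ≠ 0) ?_⟩
  change C f • g = C f • A *ᵥ b
  rw [hg, ← mulVec_smul, ← hab, mulVec_sub, ha', sub_zero]

end Lifting

/-! ### Polynomials in one distinguished variable -/

section UnivariateCoefficients

lemma eq_zero_of_mk_eq_zero_of_mem_degreeLE {k : Type*} [Field k] {f δ : Polynomial k} {e : ℕ}
    (hf : e < f.natDegree) (hδ : δ ∈ Polynomial.degreeLE k e) (h : AdjoinRoot.mk f δ = 0) :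
    δ = 0 := by
  refine Polynomial.eq_zero_of_dvd_of_natDegree_lt (AdjoinRoot.mk_eq_zero.mp h) ?_
  exact (Polynomial.natDegree_le_iff_degree_le.mpr (Polynomial.mem_degreeLE.mp hδ)).trans_lt hf

lemma mem_span_of_C_mul_mem {k σ : Type*} [Field k] [Fintype σ] {f : Polynomial k}
    (hf : Irreducible f) {S : Set (MvPolynomial σ (Polynomial k))} {d e : ℕ}
    (hdeg : ∀ h ∈ S, h.totalDegree ≤ d) (hcoeff : ∀ h ∈ S, ∀ m, (h.coeff m).natDegree ≤ e)
    (hlarge : (d + (2 * d) ^ 2 ^ Fintype.card σ + 1) ^ Fintype.card σ * e < f.natDegree)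
    {g : MvPolynomial σ (Polynomial k)} (hfg : C f * g ∈ Ideal.span S) : g ∈ Ideal.span S := by
  have : Fact (Irreducible f) := ⟨hf⟩
  obtain ⟨t, a, h, hsum⟩ := Submodule.mem_span_set'.mp hfg
  set A : Matrix Unit (Fin t) (MvPolynomial σ (Polynomial k)) := .of fun _ j => h j
  have hA : (C f : MvPolynomial σ (Polynomial k)) • (fun _ : Unit => g) = A *ᵥ a := by
    refine funext fun _ => hsum.symm.trans ?_
    simp [A, mulVec, dotProduct, mul_comm]
  have hB := syzygyBound_of_field (AdjoinRoot f) σ (Fintype.card Unit) d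
  rw [Fintype.card_unit, mul_one, Nat.card_eq_fintype_card] at hB
  obtain ⟨b, hb⟩ := exists_eq_mulVec_of_C_smul_eq_mulVec (F := fun e : ℕ => Polynomial.degreeLE k e)
    (monotone_degreeLE k) AdjoinRoot.mk_surjective hf.ne_zero (fun _ => AdjoinRoot.mk_eq_zero) hB
    (fun _ j => hdeg _ (h j).2)
    (fun _ j m => Polynomial.mem_degreeLE.mpr
      (Polynomial.natDegree_le_iff_degree_le.mp (hcoeff _ (h j).2 m)))
    (fun δ => eq_zero_of_mk_eq_zero_of_mem_degreeLE (by simpa using hlarge)) hA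
  rw [show g = ∑ j, h j * b j from congrFun hb ()]
  exact Submodule.sum_mem _ fun j _ => Ideal.mul_mem_right _ _ (Ideal.subset_span (h j).2)

end UnivariateCoefficients

section IsolateVariable

lemma optionEquivRight_monomial {R σ : Type*} [CommSemiring R] (m : Option σ →₀ ℕ) (r : R) :
    optionEquivRight R σ (monomial m r) = monomial m.some (Polynomial.monomial (m none) r) := by
  rw [optionEquivRight_apply, aeval_monomial,
    Finsupp.prod_option_index _ _ (fun _ => pow_zero _) fun _ _ _ => pow_add _ _ _, monomial_eq,
    ← Polynomial.C_mul_X_pow_eq_monomial, map_mul, map_pow, mul_assoc]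
  rfl

lemma none_add_degree_some_le_totalDegree {R σ : Type*} [CommSemiring R]
    {p : MvPolynomial (Option σ) R} {m : Option σ →₀ ℕ} (hm : m ∈ p.support) :
    m none + m.some.degree ≤ p.totalDegree := by
  refine le_of_eq_of_le ?_ (le_totalDegree hm)
  exact (m.sum_option_index (fun _ e => e) (fun _ => rfl) fun _ _ _ => rfl).symm

lemma totalDegree_optionEquivRight_le {R σ : Type*} [CommSemiring R]
    (p : MvPolynomial (Option σ) R) : (optionEquivRight R σ p).totalDegree ≤ p.totalDegree := by
  conv_lhs => rw [p.as_sum, map_sum]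
  refine totalDegree_finsetSum_le fun m hm => ?_
  rw [optionEquivRight_monomial]
  exact (totalDegree_monomial_le _ _).trans
    ((Nat.le_add_left _ _).trans (none_add_degree_some_le_totalDegree hm))

lemma natDegree_coeff_optionEquivRight_le {R σ : Type*} [CommSemiring R]
    (p : MvPolynomial (Option σ) R) (n : σ →₀ ℕ) :
    ((optionEquivRight R σ p).coeff n).natDegree ≤ p.totalDegree := by
  classical
  conv_lhs => rw [p.as_sum, map_sum, coeff_sum]
  refine Polynomial.natDegree_sum_le_of_forall_le _ _ fun m hm => ?_
  rw [optionEquivRight_monomial, coeff_monomial]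
  split_ifs
  · exact (Polynomial.natDegree_monomial_le _).trans
      ((Nat.le_add_right _ _).trans (none_add_degree_some_le_totalDegree hm))
  · simp

variable (R : Type*) {σ : Type*} [CommSemiring R] [DecidableEq σ] (i : σ)

/-- The isomorphism `R[xⱼ : j ∈ σ] ≃ R[xᵢ][xⱼ : j ≠ i]`. -/
noncomputable def isolateEquiv : MvPolynomial σ R ≃ₐ[R] MvPolynomial {j // j ≠ i} (Polynomial R) :=
  (renameEquiv R (Equiv.optionSubtypeNe i).symm).trans (optionEquivRight R _)

variable {R}

lemma isolateEquiv_aeval_X (f : Polynomial R) :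
    isolateEquiv R i (Polynomial.aeval (X i) f) = C f := by
  have hX : isolateEquiv R i (X i) = C Polynomial.X := by
    simp [isolateEquiv]
  rw [← Polynomial.aeval_algHom_apply, hX, ← algebraMap_eq,
    Polynomial.aeval_algebraMap_apply, Polynomial.aeval_X_left_apply]

lemma totalDegree_isolateEquiv_le (p : MvPolynomial σ R) :
    (isolateEquiv R i p).totalDegree ≤ p.totalDegree :=
  (totalDegree_optionEquivRight_le _).trans (totalDegree_rename_le _ p)

lemma natDegree_coeff_isolateEquiv_le (p : MvPolynomial σ R) (m : {j // j ≠ i} →₀ ℕ) :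
    ((isolateEquiv R i p).coeff m).natDegree ≤ p.totalDegree :=
  (natDegree_coeff_optionEquivRight_le _ m).trans (totalDegree_rename_le _ p)

end IsolateVariable

lemma add_two_mul_pow_add_one_pow_mul_le {N d : ℕ} (hd : 1 ≤ d) :
    (d + (2 * d) ^ 2 ^ N + 1) ^ N * d ≤ 2 ^ (N * 2 ^ N + N) * d ^ (N * 2 ^ N + 1) := by
  have hself : 2 * d ≤ (2 * d) ^ 2 ^ N := Nat.le_self_pow (by positivity) _
  calc (d + (2 * d) ^ 2 ^ N + 1) ^ N * d ≤ (2 * (2 * d) ^ 2 ^ N) ^ N * d := by gcongr; omega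
    _ = 2 ^ (N * 2 ^ N + N) * d ^ (N * 2 ^ N + 1) := by
      rw [mul_pow, ← pow_mul, mul_pow, mul_comm (2 ^ N) N, pow_add, pow_add]
      ring

lemma mul_two_pow_add_lt {N a : ℕ} (ha : N < a) : N * 2 ^ N + N < (N + 1) * 2 ^ a := by
  have hN : 1 ≤ 2 ^ N := Nat.one_le_two_pow
  calc N * 2 ^ N + N + 1 ≤ N * 2 ^ N + N * 2 ^ N + 2 ^ N * 2 := by nlinarith
    _ = (N + 1) * 2 ^ (N + 1) := by ring
    _ ≤ (N + 1) * 2 ^ a := by gcongr <;> omega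

lemma general_bound_le {n d : ℕ} (hn : 1 ≤ n) (hd : 1 ≤ d) :
    (d + (2 * d) ^ 2 ^ (n - 1) + 1) ^ (n - 1) * d ≤
      2 ^ (n * 2 ^ (2 * n + 6)) * d ^ (n * 2 ^ (3 * n + 2)) := by
  obtain ⟨N, rfl⟩ := Nat.exists_eq_add_of_le' hn
  rw [Nat.add_sub_cancel]
  refine (add_two_mul_pow_add_one_pow_mul_le hd).trans (Nat.mul_le_mul ?_ ?_)
  · exact Nat.pow_le_pow_right two_pos (mul_two_pow_add_lt (by omega)).le
  · have := mul_two_pow_add_lt (N := N) (a := 3 * (N + 1) + 2) (by omega)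
    exact Nat.pow_le_pow_right hd (by omega)

theorem irreducible_univariate_factor_degree_bound_general {k σ : Type*} [Field k] [Fintype σ]
    {S : Set (MvPolynomial σ k)} {d : ℕ} (hdeg : ∀ h ∈ S, h.totalDegree ≤ d) (i : σ)
    {f : Polynomial k} (hf : Irreducible f) {g : MvPolynomial σ k}
    (hfg : Polynomial.aeval (X i) f * g ∈ Ideal.span S) (hg : g ∉ Ideal.span S) :
    f.natDegree ≤
      (d + (2 * d) ^ 2 ^ (Fintype.card σ - 1) + 1) ^ (Fintype.card σ - 1) * d := by
  classical
  set φ := isolateEquiv k i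
  have hmap (p : MvPolynomial σ k) : p ∈ Ideal.span S ↔ φ p ∈ Ideal.span (φ '' S) := by
    rw [← Ideal.map_span, Ideal.mem_map_of_equiv]
    simp
  rw [hmap, map_mul, isolateEquiv_aeval_X] at hfg
  contrapose! hg
  rw [hmap]
  refine mem_span_of_C_mul_mem (d := d) (e := d) hf ?_ ?_ ?_ hfg
  · rintro _ ⟨h, hh, rfl⟩
    exact (totalDegree_isolateEquiv_le i h).trans (hdeg h hh)
  · rintro _ ⟨h, hh, rfl⟩ m
    exact (natDegree_coeff_isolateEquiv_le i h m).trans (hdeg h hh)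
  · simpa [Fintype.card_subtype_compl] using hg

/-- If an irreducible univariate polynomial `f ∈ k[xᵢ]` admits some
`g ∉ I` with `f·g ∈ I`, then `deg f ≤ 2^(n·2^(2n+6))·d^(n·2^(3n+2))`. -/
theorem irreducible_univariate_factor_degree_bound
    (k : Type*) [Field k] (n d : ℕ) (hn : 1 ≤ n) (hd : 1 ≤ d)
    (I : Ideal (MvPolynomial (Fin n) k))
    (S : Set (MvPolynomial (Fin n) k)) (hgen : I = Ideal.span S)
    (hdeg : ∀ g ∈ S, g.totalDegree ≤ d)
    (i : Fin n) (f : Polynomial k) (hf : Irreducible f)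
    (g : MvPolynomial (Fin n) k)
    (hfg : Polynomial.aeval (MvPolynomial.X i : MvPolynomial (Fin n) k) f * g ∈ I)
    (hg : g ∉ I) :
    f.natDegree ≤ 2 ^ (n * 2 ^ (2 * n + 6)) * d ^ (n * 2 ^ (3 * n + 2)) := by
  subst hgen
  have hbound := irreducible_univariate_factor_degree_bound_general hdeg i hf hfg hg
  rw [Fintype.card_fin] at hbound
  exact hbound.trans (general_bound_le hn hd)
end
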